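/- arXiv:2001.00849 — 4 statements merged into one kernel-verified Lean document; each statement's English description precedes it below -/
import Mathlib

section
/- Let G be a finite simple graph with at least one edge and no isolated vertices, and let χ^+(G) be the maximum of the order chromatic number χ'_<(G^L) over all edge-orderings L of G. Then: χ^+(G) = 2 if G is a star forest or G is the path P_4 on four vertices; χ^+(K_3) = 3; and for every other such graph G, χ^+(G) = ∞. -/
/-- An edge-ordered graph: a finite simple graph on vertex set `Fin nv`
together with a labeling of (potential) edges.  The edge-order is the order of
the labels; the labeling is required to be injective on the edge set via
`EOGraph.Valid`. -/
structure EOGraph where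
  nv : ℕ
  graph : SimpleGraph (Fin nv)
  label : Sym2 (Fin nv) → ℕ

namespace EOGraph

/-- The labeling is injective on the edge set, hence defines a linear order on the edges. -/
def Valid (G : EOGraph) : Prop :=
  ∀ e ∈ G.graph.edgeSet, ∀ f ∈ G.graph.edgeSet, G.label e = G.label f → e = f

/-- The number of edges of an edge-ordered graph. -/
noncomputable def edges (G : EOGraph) : ℕ := G.graph.edgeSet.ncard

/-- `G.Contains H`: some subgraph of `G`, with the edge-order induced from `G`,
is isomorphic to `H` (via a graph isomorphism preserving the relative order of edges). -/
def Contains (G H : EOGraph) : Prop :=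
  ∃ f : Fin H.nv ↪ Fin G.nv,
    (∀ a b, H.graph.Adj a b → G.graph.Adj (f a) (f b)) ∧
    ∀ a b c d, H.graph.Adj a b → H.graph.Adj c d →
      (H.label s(a, b) < H.label s(c, d) ↔ G.label s(f a, f b) < G.label s(f c, f d))

/-- `G` avoids `H` if no subgraph of `G` (with the induced edge-order) is isomorphic to `H`. -/
def Avoids (G H : EOGraph) : Prop := ¬ G.Contains H

/-- `G` avoids a family if it avoids every member. -/
def AvoidsFam (G : EOGraph) (F : Set EOGraph) : Prop := ∀ H ∈ F, G.Avoids H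

/-- Isomorphism of edge-ordered graphs. -/
def Iso (G H : EOGraph) : Prop :=
  ∃ f : Fin G.nv ≃ Fin H.nv,
    (∀ a b, G.graph.Adj a b ↔ H.graph.Adj (f a) (f b)) ∧
    ∀ a b c d, G.graph.Adj a b → G.graph.Adj c d →
      (G.label s(a, b) < G.label s(c, d) ↔ H.label s(f a, f b) < H.label s(f c, f d))

end EOGraph

/-- A simple graph `G` can avoid the family `F` if some linear order on its edges
(given by a labeling injective on the edge set) makes it into an edge-ordered graph
avoiding `F`. -/
def CanAvoid {n : ℕ} (G : SimpleGraph (Fin n)) (F : Set EOGraph) : Prop :=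
  ∃ L : Sym2 (Fin n) → ℕ, (EOGraph.mk n G L).Valid ∧ (EOGraph.mk n G L).AvoidsFam F

/-- The order chromatic number of a family of edge-ordered graphs: the least chromatic
number of a finite simple graph that cannot avoid the family (`⊤` if every finite
simple graph can avoid it). -/
noncomputable def orderChrom (F : Set EOGraph) : ℕ∞ :=
  ⨅ (n : ℕ) (G : SimpleGraph (Fin n)) (_ : ¬ CanAvoid G F), G.chromaticNumber

/-- The Turán number `lex(n, F)`: the maximum number of edges of an edge-ordered graph
on `n` vertices avoiding the family `F`. -/
noncomputable def lexFam (n : ℕ) (F : Set EOGraph) : ℕ :=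
  sSup {m : ℕ | ∃ G : EOGraph, G.nv = n ∧ G.Valid ∧ G.AvoidsFam F ∧ G.edges = m}

/-- Build a symmetric labeling from a function of the (min, max) of the two endpoints. -/
def symLabel {N : ℕ} (f : Fin N → Fin N → ℕ) : Sym2 (Fin N) → ℕ :=
  Sym2.lift ⟨fun a b => f (min a b) (max a b), fun a b => by
    show f (min a b) (max a b) = f (min b a) (max b a)
    rw [min_comm, max_comm]⟩

/-- The edge-ordered path on `k` vertices `0, 1, …, k-1`, where the edge `{i, i+1}`
gets label `l[i]`. -/
def pathEO (k : ℕ) (l : List ℕ) : EOGraph where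
  nv := k
  graph := SimpleGraph.fromRel (fun a b => (a : ℕ) + 1 = (b : ℕ))
  label := symLabel fun a _ => l.getD (a : ℕ) 0

/-- `χ⁺(G)`: the maximum of the order chromatic number `χ'_<(G^L)` over all
edge-orderings `L` of `G`. -/
noncomputable def chiPlus {n : ℕ} (G : SimpleGraph (Fin n)) : ℕ∞ :=
  ⨆ (L : Sym2 (Fin n) → ℕ) (_ : (EOGraph.mk n G L).Valid),
    orderChrom {EOGraph.mk n G L}

/-- A star forest: a non-empty simple graph all of whose connected components are
stars, i.e. each connected component has a vertex contained in all of its edges. -/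
def IsStarForest {V : Type*} (G : SimpleGraph V) : Prop :=
  G.edgeSet.Nonempty ∧
    ∀ C : G.ConnectedComponent, ∃ c ∈ C.supp,
      ∀ e ∈ G.edgeSet, (∀ v ∈ e, v ∈ C.supp) → c ∈ e

/-! Every edge-ordering gives `χ(G) ≤ χ'_<(G^L)`, because a graph that does not contain `G` avoids
every ordering of `G`; in particular `2 ≤ χ⁺(G)`, and `3 ≤ χ⁺(K₃)`. For the upper bounds it is
enough to find one host that contains `G^L` under all of its orderings.

* Any two orderings of a triangle are isomorphic, since every permutation of its edges comes from a
  permutation of its vertices; so `K₃` is its own host.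
* The edge labels of `K_{3,3}` form a matrix with distinct entries. A path on four vertices is a
  zigzag in it, consisting of an entry, an entry of the same column and one of the same row; zigzags
  around a maximal entry, a minimal entry and a median entry of a row have every possible shape.
* By Ramsey's theorem for pairs of rows and pairs of columns, a large matrix of distinct labels has
  a large submatrix in which, up to transposition, every column lies below all later columns. There
  a star forest embeds with its centres as rows and its leaves, sorted by edge label, as columns.

In all other cases `G` has a trail `xu, uv, vy` and a further edge `e`, say with `v ∉ e`. Order `G`
so that `uv < e < vy < xu`, and order any host lexicographically by smaller, then larger, endpoint.
In a copy of `G` the smaller endpoints increase weakly along these four edges, so `v` is the smaller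
endpoint of both `uv` and `vy`, hence also of `e`, a contradiction. So every host avoids `G^L`.
-/

section Ramsey

open Filter

theorem exists_eventually_eq {X γ : Type*} [Finite γ] (U : Ultrafilter X) (f : X → γ) :
    ∃ c, ∀ᶠ x in U, f x = c :=
  U.eventually_exists_iff.1 (.of_forall fun x => ⟨f x, rfl⟩)

theorem exists_strictMono_of_eventually_eventually {U : Filter ℕ} [U.NeBot] (hU : U ≤ atTop)
    {r : ℕ → ℕ → Prop} (h : ∀ᶠ i in U, ∀ᶠ j in U, r i j) :
    ∃ s : ℕ → ℕ, StrictMono s ∧ ∀ i j, i < j → r (s i) (s j) := by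
  obtain ⟨s, -, hs⟩ := exists_seq_of_forall_finset_exists (fun i => ∀ᶠ j in U, r i j)
    (fun i j => i < j ∧ r i j) fun F hF =>
      (h.and <| (eventually_all_finset F).2 fun i hi =>
        ((eventually_gt_atTop i).filter_mono hU).and (hF i hi)).exists
  exact ⟨s, fun i j hij => (hs i j hij).1, fun i j hij => (hs i j hij).2⟩

theorem exists_homogeneous_pairs_nat {γ : Type*} [Finite γ] (f : ℕ → ℕ → ℕ → ℕ → γ) (k : ℕ) :
    ∃ c, ∃ a b : ℕ → ℕ, StrictMono a ∧ StrictMono b ∧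
      ∀ i j, i < j → j < k → ∀ l m, l < m → f (a i) (a j) (b l) (b m) = c := by
  choose c₁ hc₁ using fun i j l => exists_eventually_eq (hyperfilter ℕ) (f i j l)
  choose c₂ hc₂ using fun i j => exists_eventually_eq (hyperfilter ℕ) (c₁ i j)
  choose c₃ hc₃ using fun i => exists_eventually_eq (hyperfilter ℕ) (c₂ i)
  obtain ⟨c, hc⟩ := exists_eventually_eq (hyperfilter ℕ) c₃
  have hrows : ∀ᶠ i in hyperfilter ℕ, ∀ᶠ j in hyperfilter ℕ, c₂ i j = c :=
    hc.mono fun i hi => (hc₃ i).mono fun j hj => hj.trans hi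
  obtain ⟨a, ha, hac⟩ :=
    exists_strictMono_of_eventually_eventually Nat.hyperfilter_le_atTop hrows
  have hcols : ∀ᶠ l in hyperfilter ℕ, ∀ᶠ m in hyperfilter ℕ,
      ∀ j ∈ Finset.range k, ∀ i ∈ Finset.range j, f (a i) (a j) l m = c := by
    simp only [eventually_all_finset]
    intro j _ i hi
    filter_upwards [hc₂ (a i) (a j)] with l hl
    filter_upwards [hc₁ (a i) (a j) l] with m hm
    rw [hm, hl, hac i j (Finset.mem_range.1 hi)]
  obtain ⟨b, hb, hbc⟩ :=
    exists_strictMono_of_eventually_eventually Nat.hyperfilter_le_atTop hcols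
  exact ⟨c, a, b, ha, hb, fun i j hij hj l m hlm =>
    hbc l m hlm j (Finset.mem_range.2 hj) i (Finset.mem_range.2 hij)⟩

theorem exists_homogeneous_pairs (γ : Type*) [Finite γ] (k : ℕ) :
    ∃ n, ∀ f : Fin n → Fin n → Fin n → Fin n → γ, ∃ c, ∃ a b : Fin k ↪o Fin n,
      ∀ i j l m, i < j → l < m → f (a i) (a j) (b l) (b m) = c := by
  by_contra! hbad
  choose f hf using hbad
  -- A limit over `n` of the bad colourings `f n` is homogeneous on some finite set of pairs,
  -- and so is `f n` for most `n`.
  let t (n i : ℕ) : Fin (n + 1) := Fin.ofNat (n + 1) i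
  choose C hC using fun i j l m => exists_eventually_eq (hyperfilter ℕ)
    fun n => f (n + 1) (t n i) (t n j) (t n l) (t n m)
  obtain ⟨c, a, b, ha, hb, hab⟩ := exists_homogeneous_pairs_nat C k
  have hagree : ∀ᶠ n in hyperfilter ℕ, ∀ i j l m : Fin k,
      f (n + 1) (t n (a i)) (t n (a j)) (t n (b l)) (t n (b m)) = C (a i) (a j) (b l) (b m) := by
    simp only [eventually_all]
    exact fun i j l m => hC _ _ _ _
  obtain ⟨n, hn, hak, hbk⟩ := (hagree.and <| Nat.hyperfilter_le_atTop <|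
    (eventually_ge_atTop (a k)).and (eventually_ge_atTop (b k))).exists
  have strictMono_t {s : ℕ → ℕ} (hs : StrictMono s) (hsk : s k ≤ n) :
      StrictMono fun i : Fin k => t n (s i) := by
    have hlt (i : Fin k) : s i < n + 1 := by have := hs i.isLt; omega
    intro i j hij
    simp only [t, Fin.lt_def, Fin.val_ofNat, Nat.mod_eq_of_lt (hlt _)]
    exact hs hij
  obtain ⟨i, j, l, m, hij, hlm, hne⟩ := hf (n + 1) c
    (OrderEmbedding.ofStrictMono _ (strictMono_t ha hak))
    (OrderEmbedding.ofStrictMono _ (strictMono_t hb hbk))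
  exact hne ((hn i j l m).trans (hab i j hij j.isLt l m hlm))

/-- Every entry of a column lies below every entry of each later column. -/
def ColumnsIncreasing {ι κ α : Type*} [LT κ] [LT α] (x : ι → κ → α) : Prop :=
  ∀ i i' j j', j < j' → x i j < x i' j'

/-- Entries of a common row are compared through an entry of an omitted row and column. -/
theorem exists_columnsIncreasing_of_ne {k : ℕ} {α : Type*} [Preorder α]
    {x : Fin (2 * k) → Fin (2 * k) → α}
    (h : ∀ i i' j j', i ≠ i' → j < j' → x i j < x i' j') :
    ∃ e : Fin k ↪ Fin (2 * k), ColumnsIncreasing fun i j => x (e i) (e j) := by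
  refine ⟨⟨fun i => ⟨2 * i, by omega⟩, fun i j hij => ?_⟩, fun i i' j j' hj => ?_⟩
  · simpa [Fin.ext_iff] using hij
  · change x ⟨2 * i, _⟩ ⟨2 * j, _⟩ < x ⟨2 * i', _⟩ ⟨2 * j', _⟩
    obtain rfl | hi := eq_or_ne i i'
    · have hmid : 2 * (j : ℕ) + 1 < 2 * j' := by omega
      calc x ⟨2 * i, by omega⟩ ⟨2 * j, by omega⟩
          < x ⟨2 * i + 1, by omega⟩ ⟨2 * j + 1, by omega⟩ := h _ _ _ _ (by simp) (by simp)
        _ < x ⟨2 * i, by omega⟩ ⟨2 * j', by omega⟩ := h _ _ _ _ (by simp) hmid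
    · exact h _ _ _ _ (by simpa [Fin.ext_iff] using hi) (by simpa using hj)

theorem exists_columnsIncreasing (α : Type*) [LinearOrder α] (k : ℕ) :
    ∃ n, ∀ x : Fin n → Fin n → α, Function.Injective2 x → ∃ c w : Fin k ↪ Fin n,
      ColumnsIncreasing (fun i j => x (c i) (w j)) ∨
      ColumnsIncreasing (fun i j => x (w j) (c i)) := by
  obtain ⟨n, hn⟩ := exists_homogeneous_pairs (Prop × Prop) (2 * k)
  refine ⟨n, fun x hx => ?_⟩
  obtain ⟨⟨p, q⟩, a, b, hab⟩ := hn fun i i' j j' => (x i j < x i' j', x i j' < x i' j)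
  simp only [Prod.mk.injEq, eq_iff_iff] at hab
  have hdiag {i i' j j'} (hi : i < i') (hj : j < j') := (hab i i' j j' hi hj).1
  have hanti {i i' j j'} (hi : i < i') (hj : j < j') := (hab i i' j j' hi hj).2
  have lt_of_not_lt {i i' j j'} (hi : i < i') (h : ¬ x (a i) (b j) < x (a i') (b j')) :
      x (a i') (b j') < x (a i) (b j) :=
    (not_lt.1 h).lt_of_ne fun heq => hi.ne' (a.injective (hx heq).1)
  by_cases hp : p <;> by_cases hq : q
  · obtain ⟨e, he⟩ := exists_columnsIncreasing_of_ne (x := fun i j => x (a j) (b i))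
      fun i i' j j' hi hj => hi.lt_or_gt.elim
        (fun hi => (hdiag hj hi).2 hp) (fun hi => (hanti hj hi).2 hq)
    exact ⟨e.trans b.toEmbedding, e.trans a.toEmbedding, .inr he⟩
  · obtain ⟨e, he⟩ := exists_columnsIncreasing_of_ne (x := fun i j => x (a i) (b j))
      fun i i' j j' hi hj => hi.lt_or_gt.elim
        (fun hi => (hdiag hi hj).2 hp) (fun hi => lt_of_not_lt hi fun h => hq ((hanti hi hj).1 h))
    exact ⟨e.trans a.toEmbedding, e.trans b.toEmbedding, .inl he⟩
  · obtain ⟨e, he⟩ := exists_columnsIncreasing_of_ne (x := fun i j => x (a i) (b j.rev))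
      fun i i' j j' hi hj => hi.lt_or_gt.elim
        (fun hi => (hanti hi (Fin.rev_lt_rev.2 hj)).2 hq)
        (fun hi => lt_of_not_lt hi fun h => hp ((hdiag hi (Fin.rev_lt_rev.2 hj)).1 h))
    exact ⟨e.trans a.toEmbedding, (e.trans Fin.revPerm.toEmbedding).trans b.toEmbedding, .inl he⟩
  · obtain ⟨e, he⟩ := exists_columnsIncreasing_of_ne (x := fun i j => x (a j.rev) (b i))
      fun i i' j j' hi hj => hi.lt_or_gt.elim
        (fun hi => lt_of_not_lt (Fin.rev_lt_rev.2 hj)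
          fun h => hq ((hanti (Fin.rev_lt_rev.2 hj) hi).1 h))
        (fun hi => lt_of_not_lt (Fin.rev_lt_rev.2 hj)
          fun h => hp ((hdiag (Fin.rev_lt_rev.2 hj) hi).1 h))
    exact ⟨e.trans b.toEmbedding, (e.trans Fin.revPerm.toEmbedding).trans a.toEmbedding, .inr he⟩

end Ramsey

theorem exists_perm_forall_lt_imp_lt {n : ℕ} {α β : Type*} [LinearOrder α] [LinearOrder β]
    (f : Fin n → α) {g : Fin n → β} (hg : Function.Injective g) :
    ∃ π : Equiv.Perm (Fin n), ∀ i j, f i < f j → g (π i) < g (π j) := by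
  refine ⟨(Tuple.sort f).symm.trans (Tuple.sort g), fun i j hij => ?_⟩
  have hsort_g : StrictMono (g ∘ Tuple.sort g) :=
    (Tuple.monotone_sort g).strictMono_of_injective (hg.comp (Tuple.sort g).injective)
  refine hsort_g ((Tuple.monotone_sort f).reflect_lt ?_)
  simpa only [Function.comp_apply, Equiv.apply_symm_apply] using hij

section OrderChromaticNumber

open SimpleGraph

variable {V V' W W' α β : Type*} {G : SimpleGraph V} {G' : SimpleGraph V'} {H : SimpleGraph W}
  {H' : SimpleGraph W'}

/-- Containment of edge-ordered graphs, for labels in arbitrary ordered types: the labelled graph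
`(H, K)` contains `(G, L)`. Monotonicity is required in one direction only, which is enough when
`L` is injective on the edges and `α` is linearly ordered. -/
def IsOrderContained [LT α] [LT β] (G : SimpleGraph V) (L : Sym2 V → α) (H : SimpleGraph W)
    (K : Sym2 W → β) : Prop :=
  ∃ f : G.Copy H, ∀ e ∈ G.edgeSet, ∀ e' ∈ G.edgeSet, L e < L e' → K (e.map f) < K (e'.map f)

theorem IsOrderContained.of_iso_left [LT α] [LT β] {L : Sym2 V → α} {K : Sym2 W → β}
    (φ : G ≃g G') (h : IsOrderContained G' (L ∘ Sym2.map φ.symm) H K) :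
    IsOrderContained G L H K := by
  obtain ⟨f, hf⟩ := h
  refine ⟨f.comp φ.toCopy, fun e he e' he' hlt => ?_⟩
  have := hf _ (φ.map_mem_edgeSet_iff.2 he) _ (φ.map_mem_edgeSet_iff.2 he')
  simp only [Function.comp_def, Sym2.map_map, RelIso.symm_apply_apply, Sym2.map_id', id] at this
  exact this hlt

theorem IsOrderContained.of_iso_right [LT α] [LT β] {L : Sym2 V → α} {K : Sym2 W' → β}
    (ψ : H ≃g H') (h : IsOrderContained G L H (K ∘ Sym2.map ψ)) : IsOrderContained G L H' K := by
  obtain ⟨f, hf⟩ := h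
  refine ⟨ψ.toCopy.comp f, fun e he e' he' hlt => ?_⟩
  have := hf e he e' he' hlt
  simp only [Function.comp_apply, Sym2.map_map] at this
  exact this

theorem EOGraph.valid_iff_injOn {n : ℕ} {G : SimpleGraph (Fin n)} {L : Sym2 (Fin n) → ℕ} :
    (EOGraph.mk n G L).Valid ↔ Set.InjOn L G.edgeSet :=
  ⟨fun h e he e' he' => h e he e' he', fun h _ he _ he' => h he he'⟩

theorem EOGraph.contains_of_isOrderContained {n m : ℕ} {G : SimpleGraph (Fin n)}
    {L : Sym2 (Fin n) → ℕ} {H : SimpleGraph (Fin m)} {K : Sym2 (Fin m) → ℕ}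
    (hL : Set.InjOn L G.edgeSet) (h : IsOrderContained G L H K) :
    (EOGraph.mk m H K).Contains (EOGraph.mk n G L) := by
  obtain ⟨f, hf⟩ := h
  refine ⟨f.toEmbedding, fun a b => f.toHom.map_adj, fun a b c d hab hcd => ⟨hf _ hab _ hcd, ?_⟩⟩
  contrapose!
  intro hle
  obtain heq | hlt := hle.eq_or_lt
  · exact (congrArg (fun e => K (e.map f)) (hL hcd hab heq)).le
  · exact (hf _ hcd _ hab hlt).le

theorem orderChrom_le_chromaticNumber {n : ℕ} {G : SimpleGraph (Fin n)} {L : Sym2 (Fin n) → ℕ}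
    (hL : Set.InjOn L G.edgeSet) [Finite W] (H : SimpleGraph W)
    (h : ∀ K : Sym2 W → ℕ, Set.InjOn K H.edgeSet → IsOrderContained G L H K) :
    orderChrom {EOGraph.mk n G L} ≤ H.chromaticNumber := by
  obtain ⟨m, ⟨e⟩⟩ := Finite.exists_equiv_fin W
  rw [chromaticNumber_congr (Iso.map e H)]
  refine iInf₂_le_of_le m (H.map e) (iInf_le _ ?_)
  rintro ⟨K, hK, havoid⟩
  refine havoid _ rfl (EOGraph.contains_of_isOrderContained hL
    ((h (K ∘ Sym2.map (Iso.map e H)) ?_).of_iso_right (Iso.map e H)))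
  refine (EOGraph.valid_iff_injOn.1 hK).comp (Sym2.map.injective (Iso.map e H).injective).injOn ?_
  exact fun e' he' => (Iso.map e H).map_mem_edgeSet_iff.2 he'

theorem chiPlus_le_chromaticNumber {n : ℕ} {G : SimpleGraph (Fin n)} (φ : G ≃g G') [Finite W]
    (H : SimpleGraph W) (h : ∀ (L : Sym2 V' → ℕ) (K : Sym2 W → ℕ), Set.InjOn K H.edgeSet →
      IsOrderContained G' L H K) :
    chiPlus G ≤ H.chromaticNumber := by
  refine iSup₂_le fun L hL => ?_
  exact orderChrom_le_chromaticNumber (EOGraph.valid_iff_injOn.1 hL) H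
    fun K hK => .of_iso_left φ (h _ K hK)

theorem chromaticNumber_le_orderChrom {n : ℕ} (G : SimpleGraph (Fin n)) (L : Sym2 (Fin n) → ℕ) :
    G.chromaticNumber ≤ orderChrom {EOGraph.mk n G L} := by
  refine le_iInf₂ fun m H => le_iInf fun hH => ?_
  obtain ⟨K⟩ := nonempty_embedding_nat (Sym2 (Fin m))
  have hcontains : (EOGraph.mk m H K).Contains (EOGraph.mk n G L) := by
    by_contra hnot
    exact hH ⟨K, EOGraph.valid_iff_injOn.2 K.injective.injOn, by rintro _ rfl; exact hnot⟩
  obtain ⟨f, hf, -⟩ := hcontains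
  exact chromaticNumber_mono_of_hom ⟨f, hf _ _⟩

theorem orderChrom_le_chiPlus {n : ℕ} {G : SimpleGraph (Fin n)} {L : Sym2 (Fin n) → ℕ}
    (hL : Set.InjOn L G.edgeSet) : orderChrom {EOGraph.mk n G L} ≤ chiPlus G :=
  le_iSup₂_of_le L (EOGraph.valid_iff_injOn.2 hL) le_rfl

theorem chromaticNumber_le_chiPlus {n : ℕ} (G : SimpleGraph (Fin n)) :
    G.chromaticNumber ≤ chiPlus G := by
  obtain ⟨L⟩ := nonempty_embedding_nat (Sym2 (Fin n))
  exact (chromaticNumber_le_orderChrom G L).trans (orderChrom_le_chiPlus L.injective.injOn)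

end OrderChromaticNumber

theorem chromaticNumber_completeBipartiteGraph_le_two (V W : Type*) :
    (completeBipartiteGraph V W).chromaticNumber ≤ 2 :=
  (SimpleGraph.CompleteBipartiteGraph.bicoloring V W).colorable.chromaticNumber_le

section Triangle

open SimpleGraph

theorem isOrderContained_top_three {α β : Type*} [LinearOrder α] [LinearOrder β]
    (L : Sym2 (Fin 3) → α) {K : Sym2 (Fin 3) → β}
    (hK : Set.InjOn K (⊤ : SimpleGraph (Fin 3)).edgeSet) : IsOrderContained ⊤ L ⊤ K := by
  let opp (c : Fin 3) : Sym2 (Fin 3) := s(c + 1, c + 2)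
  have opp_mem : ∀ c, opp c ∈ (⊤ : SimpleGraph (Fin 3)).edgeSet := by decide
  have opp_injective : Function.Injective opp := by decide
  have exists_opp : ∀ e ∈ (⊤ : SimpleGraph (Fin 3)).edgeSet, ∃ c, e = opp c := by decide
  have map_opp : ∀ (π : Equiv.Perm (Fin 3)) c, (opp c).map π = opp (π c) := by decide
  obtain ⟨π, hπ⟩ := exists_perm_forall_lt_imp_lt (L ∘ opp) (g := K ∘ opp)
    fun c d hcd => opp_injective (hK (opp_mem c) (opp_mem d) hcd)
  refine ⟨⟨⟨π, π.injective.ne⟩, π.injective⟩, fun e he e' he' hlt => ?_⟩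
  obtain ⟨c, rfl⟩ := exists_opp e he
  obtain ⟨d, rfl⟩ := exists_opp e' he'
  change K ((opp c).map π) < K ((opp d).map π)
  rw [map_opp, map_opp]
  exact hπ c d hlt

end Triangle

section Path

open SimpleGraph

theorem mem_edgeSet_pathGraph_iff {n : ℕ} {e : Sym2 (Fin (n + 1))} :
    e ∈ (pathGraph (n + 1)).edgeSet ↔ ∃ t : Fin n, e = s(t.castSucc, t.succ) := by
  constructor
  · induction e with | _ a b
    intro he
    obtain h | h := pathGraph_adj.1 he
    · exact ⟨⟨a, by lia⟩, by simp [h]⟩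
    · refine ⟨⟨b, by lia⟩, ?_⟩
      rw [Sym2.eq_swap]
      simp [h]
  · rintro ⟨t, rfl⟩
    simp [pathGraph_adj]

variable {W α β : Type*} [LT α] [LT β] {H : SimpleGraph W} {K : Sym2 W → β}

theorem isOrderContained_pathGraph {n : ℕ} {L : Sym2 (Fin (n + 1)) → α} (p : Fin (n + 1) ↪ W)
    (hadj : ∀ t : Fin n, H.Adj (p t.castSucc) (p t.succ))
    (hlt : ∀ t t' : Fin n, L s(t.castSucc, t.succ) < L s(t'.castSucc, t'.succ) →
      K s(p t.castSucc, p t.succ) < K s(p t'.castSucc, p t'.succ)) :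
    IsOrderContained (pathGraph (n + 1)) L H K := by
  have hmap : ∀ e ∈ (pathGraph (n + 1)).edgeSet, e.map p ∈ H.edgeSet := by
    intro e he
    obtain ⟨t, rfl⟩ := mem_edgeSet_pathGraph_iff.1 he
    exact hadj t
  refine ⟨⟨⟨p, fun {a b} hab => hmap s(a, b) hab⟩, p.injective⟩, fun e he e' he' hL => ?_⟩
  obtain ⟨t, rfl⟩ := mem_edgeSet_pathGraph_iff.1 he
  obtain ⟨t', rfl⟩ := mem_edgeSet_pathGraph_iff.1 he'
  exact hlt t t' hL

theorem isOrderContained_pathGraph_of_rev {n : ℕ} {L : Sym2 (Fin (n + 1)) → α}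
    (p : Fin (n + 1) ↪ W) (hadj : ∀ t : Fin n, H.Adj (p t.castSucc) (p t.succ))
    (hlt : ∀ t t' : Fin n, L s(t.castSucc, t.succ) < L s(t'.castSucc, t'.succ) →
      K s(p t.rev.castSucc, p t.rev.succ) < K s(p t'.rev.castSucc, p t'.rev.succ)) :
    IsOrderContained (pathGraph (n + 1)) L H K := by
  refine isOrderContained_pathGraph (Fin.revPerm.toEmbedding.trans p) (fun t => ?_)
    fun t t' hL => ?_
  · simpa [Fin.rev_castSucc, Fin.rev_succ] using (hadj t.rev).symm
  · simpa [Fin.rev_castSucc, Fin.rev_succ, Sym2.eq_swap] using hlt t t' hL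

end Path

theorem injective2_of_injOn_edgeSet_completeBipartiteGraph {ι κ β : Type*} {K : Sym2 (ι ⊕ κ) → β}
    (hK : Set.InjOn K (completeBipartiteGraph ι κ).edgeSet) :
    Function.Injective2 fun i j => K s(.inl i, .inr j) := fun i i' j j' h => by
  simpa using hK (by simp) (by simp) h

section FourVertexPath

open SimpleGraph

variable {α β : Type*} [LinearOrder α] [LinearOrder β]

theorem exists_zigzag_lt_gt {ι κ : Type*} [Finite ι] [Finite κ] [Nontrivial ι] [Nontrivial κ]
    {x : ι → κ → β} (hx : Function.Injective2 x) :
    ∃ i i' j j', i ≠ i' ∧ j ≠ j' ∧ x i' j < x i j ∧ x i j' < x i j := by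
  obtain ⟨⟨i, j⟩, hmax⟩ := Finite.exists_max fun q : ι × κ => x q.1 q.2
  obtain ⟨i', hi⟩ := exists_ne i
  obtain ⟨j', hj⟩ := exists_ne j
  exact ⟨i, i', j, j', hi.symm, hj.symm, (hmax (i', j)).lt_of_ne fun h => hi (hx h).1,
    (hmax (i, j')).lt_of_ne fun h => hj (hx h).2⟩

theorem exists_zigzag_monotone {ι : Type*} [Nontrivial ι] {x : ι → Fin 3 → β}
    (hx : Function.Injective2 x) : ∃ i i' j j', i ≠ i' ∧ j ≠ j' ∧
      (x i' j < x i j ∧ x i j < x i j' ∨ x i j' < x i j ∧ x i j < x i' j) := by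
  obtain ⟨i, i', hi⟩ := exists_pair_ne ι
  obtain ⟨σ, hσ⟩ := exists_perm_forall_lt_imp_lt id (hx.right i)
  obtain hlt | hgt := lt_or_gt_of_ne fun h : x i' (σ 1) = x i (σ 1) => hi (hx h).1.symm
  · exact ⟨i, i', σ 1, σ 2, hi, σ.injective.ne (by decide), .inl ⟨hlt, hσ 1 2 (by decide)⟩⟩
  · exact ⟨i, i', σ 1, σ 0, hi, σ.injective.ne (by decide), .inr ⟨hσ 0 1 (by decide), hgt⟩⟩

theorem exists_zigzag_forall_lt_imp_lt {x : Fin 3 → Fin 3 → β} (hx : Function.Injective2 x)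
    (l : Fin 3 → α) : ∃ i i' j j', i ≠ i' ∧ j ≠ j' ∧
      ((∀ t t', l t < l t' → ![x i' j, x i j, x i j'] t < ![x i' j, x i j, x i j'] t') ∨
        ∀ t t', l t < l t' → ![x i' j, x i j, x i j'] t.rev < ![x i' j, x i j, x i j'] t'.rev) := by
  obtain ⟨i, i', j, j', hi, hj, h⟩ : ∃ i i' j j', i ≠ i' ∧ j ≠ j' ∧
      (l 0 ≤ l 1 ∧ l 2 ≤ l 1 ∧ x i' j < x i j ∧ x i j' < x i j ∨
        l 1 ≤ l 0 ∧ l 1 ≤ l 2 ∧ x i j < x i' j ∧ x i j < x i j' ∨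
        (l 0 ≤ l 1 ∧ l 1 ≤ l 2 ∨ l 2 ≤ l 1 ∧ l 1 ≤ l 0) ∧
          (x i' j < x i j ∧ x i j < x i j' ∨ x i j' < x i j ∧ x i j < x i' j)) := by
    obtain h₀ | h₀ := le_total (l 0) (l 1) <;> obtain h₂ | h₂ := le_total (l 2) (l 1)
    · obtain ⟨i, i', j, j', hi, hj, h⟩ := exists_zigzag_lt_gt hx
      exact ⟨i, i', j, j', hi, hj, .inl ⟨h₀, h₂, h⟩⟩
    · obtain ⟨i, i', j, j', hi, hj, h⟩ := exists_zigzag_monotone hx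
      exact ⟨i, i', j, j', hi, hj, .inr (.inr ⟨.inl ⟨h₀, h₂⟩, h⟩)⟩
    · obtain ⟨i, i', j, j', hi, hj, h⟩ := exists_zigzag_monotone hx
      exact ⟨i, i', j, j', hi, hj, .inr (.inr ⟨.inr ⟨h₂, h₀⟩, h⟩)⟩
    · obtain ⟨i, i', j, j', hi, hj, h⟩ := exists_zigzag_lt_gt (β := βᵒᵈ) hx
      exact ⟨i, i', j, j', hi, hj, .inr (.inl ⟨h₀, h₂, h⟩)⟩
  have hne : x i' j ≠ x i j' := fun h => hi (hx h).1.symm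
  refine ⟨i, i', j, j', hi, hj, ?_⟩
  simp only [Fin.forall_fin_succ, Fin.succ_zero_eq_one, Fin.succ_one_eq_two, Fin.rev_zero,
    Fin.reduceLast, Fin.reduceRev, Matrix.cons_val, IsEmpty.forall_iff, and_true]
  grind

theorem isOrderContained_pathGraph_four (L : Sym2 (Fin 4) → α) {K : Sym2 (Fin 3 ⊕ Fin 3) → β}
    (hK : Set.InjOn K (completeBipartiteGraph (Fin 3) (Fin 3)).edgeSet) :
    IsOrderContained (pathGraph 4) L (completeBipartiteGraph (Fin 3) (Fin 3)) K := by
  obtain ⟨i, i', j, j', hi, hj, h⟩ :=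
    exists_zigzag_forall_lt_imp_lt (injective2_of_injOn_edgeSet_completeBipartiteGraph hK)
      fun t => L s(t.castSucc, t.succ)
  let p : Fin 4 ↪ Fin 3 ⊕ Fin 3 := ⟨![.inl i', .inr j, .inl i, .inr j'], by
    simp [Function.Injective, Fin.forall_fin_succ, hi, hi.symm, hj, hj.symm]⟩
  have hadj : ∀ t : Fin 3,
      (completeBipartiteGraph (Fin 3) (Fin 3)).Adj (p t.castSucc) (p t.succ) := by
    intro t
    fin_cases t
    exacts [.inl ⟨rfl, rfl⟩, .inr ⟨rfl, rfl⟩, .inl ⟨rfl, rfl⟩]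
  have hlabel : ![K s(.inl i', .inr j), K s(.inl i, .inr j), K s(.inl i, .inr j')] =
      fun t : Fin 3 => K s(p t.castSucc, p t.succ) := by
    ext t
    fin_cases t
    exacts [rfl, congrArg K Sym2.eq_swap, rfl]
  simp only [hlabel] at h
  exact h.elim (isOrderContained_pathGraph p hadj) (isOrderContained_pathGraph_of_rev p hadj)

end FourVertexPath

section StarForest

open SimpleGraph

variable {V W α β : Type*} {G : SimpleGraph V}

theorem IsStarForest.exists_center (hG : IsStarForest G) : ∃ cen : V → V,
    (∀ v, cen (cen v) = cen v) ∧ ∀ e ∈ G.edgeSet, ∃ v, cen v ≠ v ∧ e = s(v, cen v) := by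
  choose c hc hce using hG.2
  let cen (v : V) : V := c (G.connectedComponentMk v)
  have cen_congr {u v : V} (h : G.Reachable u v) : cen u = cen v :=
    congrArg c (ConnectedComponent.eq.2 h)
  have reachable_cen (v : V) : G.Reachable v (cen v) := (ConnectedComponent.eq.1 (hc _)).symm
  have cen_eq_or {u v : V} (h : G.Adj u v) : cen u = u ∨ cen u = v := by
    refine Sym2.mem_iff.1 (hce _ s(u, v) h fun x hx => ConnectedComponent.eq.2 ?_)
    obtain rfl | rfl := Sym2.mem_iff.1 hx
    exacts [.rfl, h.symm.reachable]
  refine ⟨cen, fun v => (cen_congr (reachable_cen v)).symm, fun e he => ?_⟩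
  induction e with | _ u v
  have huv : G.Adj u v := he
  obtain h | h := cen_eq_or huv
  · rw [cen_congr huv.reachable] at h
    exact ⟨v, h ▸ huv.ne, by rw [h, Sym2.eq_swap]⟩
  · exact ⟨u, h ▸ huv.ne', by rw [h]⟩

theorem IsStarForest.isOrderContained [LT α] [LT β] (hG : IsStarForest G) {L : Sym2 V → α}
    {H : SimpleGraph W} {K : Sym2 W → β} {c : V → W} {w : Sym2 V → W} (hc : Function.Injective c)
    (hw : Function.Injective w) (hadj : ∀ v e, H.Adj (c v) (w e))
    (hlt : ∀ v v' e e', L e < L e' → K s(c v, w e) < K s(c v', w e')) :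
    IsOrderContained G L H K := by
  classical
  obtain ⟨cen, cen_cen, exists_edge⟩ := hG.exists_center
  let f (v : V) : W := if cen v = v then c v else w s(v, cen v)
  have f_center {v} (h : cen v = v) : f v = c v := if_pos h
  have f_leaf {v} (h : cen v ≠ v) : f v = w s(v, cen v) := if_neg h
  have map_edge {v} (h : cen v ≠ v) : s(v, cen v).map f = s(c (cen v), w s(v, cen v)) := by
    rw [Sym2.map_mk, f_leaf h, f_center (cen_cen v), Sym2.eq_swap]
  have map_mem : ∀ e ∈ G.edgeSet, e.map f ∈ H.edgeSet := by
    intro e he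
    obtain ⟨v, hv, rfl⟩ := exists_edge e he
    exact map_edge hv ▸ hadj _ _
  have f_injective : Function.Injective f := by
    intro u v huv
    by_cases hu : cen u = u <;> by_cases hv : cen v = v
    · rw [f_center hu, f_center hv] at huv
      exact hc huv
    · rw [f_center hu, f_leaf hv] at huv
      exact absurd huv (hadj _ _).ne
    · rw [f_leaf hu, f_center hv] at huv
      exact absurd huv (hadj _ _).ne'
    · rw [f_leaf hu, f_leaf hv] at huv
      obtain h | ⟨h, -⟩ := Sym2.eq_iff.1 (hw huv)
      · exact h.1
      · exact absurd (h ▸ cen_cen v) hu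
  refine ⟨⟨⟨f, fun {u v} => map_mem s(u, v)⟩, f_injective⟩, fun e he e' he' hL => ?_⟩
  obtain ⟨u, hu, rfl⟩ := exists_edge e he
  obtain ⟨v, hv, rfl⟩ := exists_edge e' he'
  change K (s(u, cen u).map f) < K (s(v, cen v).map f)
  rw [map_edge hu, map_edge hv]
  exact hlt _ _ _ _ hL

theorem IsStarForest.exists_completeBipartiteGraph_isOrderContained [Finite V]
    (hG : IsStarForest G) (α β : Type*) [LinearOrder α] [LinearOrder β] :
    ∃ n, ∀ (L : Sym2 V → α) (K : Sym2 (Fin n ⊕ Fin n) → β),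
      Set.InjOn K (completeBipartiteGraph (Fin n) (Fin n)).edgeSet →
        IsOrderContained G L (completeBipartiteGraph (Fin n) (Fin n)) K := by
  let ε := Finite.equivFin (Sym2 V)
  obtain ⟨n, hn⟩ := exists_columnsIncreasing β (Nat.card (Sym2 V))
  refine ⟨n, fun L K hK => ?_⟩
  obtain ⟨π, hπ⟩ := exists_perm_forall_lt_imp_lt (L ∘ ε.symm) Function.injective_id
  have hrank {e e'} (h : L e < L e') : π (ε e) < π (ε e') := hπ _ _ (by simpa using h)
  have center_injective : Function.Injective fun v => ε (Sym2.diag v) :=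
    ε.injective.comp Sym2.diag_injective
  have rank_injective : Function.Injective fun e => π (ε e) := π.injective.comp ε.injective
  obtain ⟨c, w, hcw | hcw⟩ := hn _ (injective2_of_injOn_edgeSet_completeBipartiteGraph hK)
  · exact hG.isOrderContained (Sum.inl_injective.comp (c.injective.comp center_injective))
      (Sum.inr_injective.comp (w.injective.comp rank_injective)) (by simp)
      fun _ _ _ _ h => hcw _ _ _ _ (hrank h)
  · refine hG.isOrderContained (Sum.inr_injective.comp (c.injective.comp center_injective))
      (Sum.inl_injective.comp (w.injective.comp rank_injective)) (by simp) fun _ _ _ _ h => ?_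
    simpa only [Sym2.eq_swap, Function.comp_apply] using hcw _ _ _ _ (hrank h)

end StarForest

section ThreeTrail

open SimpleGraph

variable {V : Type*} {G : SimpleGraph V} {x u v y : V}

/-- The edges `xu`, `uv`, `vy` form a trail of length three: a path on four vertices, or, if
`x = y`, a triangle. -/
structure IsThreeTrail (G : SimpleGraph V) (x u v y : V) : Prop where
  adj_left : G.Adj x u
  adj_mid : G.Adj u v
  adj_right : G.Adj v y
  left_ne : x ≠ v
  right_ne : u ≠ y

theorem IsThreeTrail.symm (h : IsThreeTrail G x u v y) : IsThreeTrail G y v u x :=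
  ⟨h.adj_right.symm, h.adj_mid.symm, h.adj_left.symm, h.right_ne.symm, h.left_ne.symm⟩

theorem eq_or_adj_of_reachable {c a : V} (hc : ∀ w z, G.Adj c w → G.Adj w z → z = c)
    (ha : G.Reachable c a) : a = c ∨ G.Adj c a := by
  rw [reachable_iff_reflTransGen] at ha
  induction ha with
  | refl => exact .inl rfl
  | tail _ hab ih =>
    obtain rfl | ih := ih
    · exact .inr hab
    · exact .inl (hc _ _ ih hab)

theorem exists_reachable_center_of_forall_not_isThreeTrail
    (h : ∀ x u v y, ¬ IsThreeTrail G x u v y) (a : V) :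
    ∃ c, G.Reachable a c ∧ ∀ w z, G.Adj c w → G.Adj w z → z = c := by
  by_cases ha : ∀ w z, G.Adj a w → G.Adj w z → z = a
  · exact ⟨a, .rfl, ha⟩
  push Not at ha
  obtain ⟨c, z, hac, hcz, hza⟩ := ha
  refine ⟨c, hac.reachable, fun w w' hcw hww' => ?_⟩
  by_contra hw'
  obtain rfl | hwa := eq_or_ne w a
  · exact h z c w w' ⟨hcz.symm, hcw, hww', hza, Ne.symm hw'⟩
  · exact h a c w w' ⟨hac, hcw, hww', hwa.symm, Ne.symm hw'⟩

theorem isStarForest_of_forall_not_isThreeTrail (hne : G.edgeSet.Nonempty)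
    (h : ∀ x u v y, ¬ IsThreeTrail G x u v y) : IsStarForest G := by
  refine ⟨hne, fun C => ?_⟩
  obtain ⟨a, rfl⟩ := C.exists_rep
  obtain ⟨c, hac, hc⟩ := exists_reachable_center_of_forall_not_isThreeTrail h a
  refine ⟨c, ConnectedComponent.eq.2 hac.symm, fun e he hea => ?_⟩
  induction e with | _ b b'
  have hcb : G.Reachable c b :=
    hac.symm.trans (ConnectedComponent.eq.1 (hea b (Sym2.mem_mk_left b b'))).symm
  obtain rfl | hadj := eq_or_adj_of_reachable hc hcb
  · exact Sym2.mem_mk_left _ _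
  · exact hc b b' hadj he ▸ Sym2.mem_mk_right _ _

theorem nonempty_iso_top_of_bijective {ι : Type*} {f : ι → V} (hf : Function.Bijective f)
    (hadj : Pairwise fun i j => G.Adj (f i) (f j)) : Nonempty (G ≃g (⊤ : SimpleGraph ι)) :=
  ⟨.symm ⟨.ofBijective f hf, fun {_ _} =>
    ⟨fun h => ne_of_apply_ne f h.ne, fun h => hadj h⟩⟩⟩

theorem nonempty_iso_pathGraph_of_bijective {n : ℕ} {p : Fin (n + 1) → V}
    (hp : Function.Bijective p)
    (hG : ∀ e, e ∈ G.edgeSet ↔ ∃ t : Fin n, e = s(p t.castSucc, p t.succ)) :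
    Nonempty (G ≃g pathGraph (n + 1)) := by
  refine ⟨.symm ⟨.ofBijective p hp, fun {i j} => ?_⟩⟩
  calc G.Adj (p i) (p j)
      ↔ ∃ t : Fin n, s(i, j).map p = s(t.castSucc, t.succ).map p := hG s(p i, p j)
    _ ↔ ∃ t : Fin n, s(i, j) = s(t.castSucc, t.succ) := by
        simp only [(Sym2.map.injective hp.1).eq_iff]
    _ ↔ (pathGraph (n + 1)).Adj i j := mem_edgeSet_pathGraph_iff.symm

theorem IsThreeTrail.nonempty_iso (h : IsThreeTrail G x u v y) (hiso : ∀ a, ∃ b, G.Adj a b)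
    (hG : ∀ e ∈ G.edgeSet, e ∈ [s(x, u), s(u, v), s(v, y)]) :
    Nonempty (G ≃g pathGraph 4) ∨ Nonempty (G ≃g (⊤ : SimpleGraph (Fin 3))) := by
  obtain ⟨hxu, huv, hvy, hxv, huy⟩ := h
  have hcover (a : V) : a = x ∨ a = u ∨ a = v ∨ a = y := by
    obtain ⟨b, hab⟩ := hiso a
    have := hG s(a, b) hab
    simp only [List.mem_cons, List.not_mem_nil, Sym2.eq_iff] at this
    tauto
  obtain rfl | hxy := eq_or_ne x y
  · right
    refine nonempty_iso_top_of_bijective (f := ![x, u, v]) ⟨?_, fun a => ?_⟩ ?_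
    · simp [Function.Injective, Fin.forall_fin_succ, hxu.ne, hxu.ne', huv.ne, huv.ne', hxv,
        hxv.symm]
    · obtain rfl | rfl | rfl | rfl := hcover a
      exacts [⟨0, rfl⟩, ⟨1, rfl⟩, ⟨2, rfl⟩, ⟨0, rfl⟩]
    · simp [Pairwise, Fin.forall_fin_succ, hxu, hxu.symm, huv, huv.symm, hvy, hvy.symm]
  · left
    refine nonempty_iso_pathGraph_of_bijective (p := ![x, u, v, y]) ⟨?_, fun a => ?_⟩ fun e => ?_
    · simp [Function.Injective, Fin.forall_fin_succ, hxu.ne, hxu.ne', huv.ne, huv.ne', hvy.ne,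
        hvy.ne', hxv, hxv.symm, huy, huy.symm, hxy, hxy.symm]
    · obtain rfl | rfl | rfl | rfl := hcover a
      exacts [⟨0, rfl⟩, ⟨1, rfl⟩, ⟨2, rfl⟩, ⟨3, rfl⟩]
    · have hsub : e ∈ [s(x, u), s(u, v), s(v, y)] → e ∈ G.edgeSet := by
        simp only [List.mem_cons, List.not_mem_nil, or_false]
        rintro (rfl | rfl | rfl)
        exacts [hxu, huv, hvy]
      simpa [Fin.exists_fin_succ] using (⟨hG e, hsub⟩ : e ∈ G.edgeSet ↔ _)

end ThreeTrail

section InfiniteOrderChromaticNumber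

theorem exists_injective_label_inf_le (n : ℕ) : ∃ K : Sym2 (Fin n) → ℕ,
    Function.Injective K ∧ ∀ e e', K e ≤ K e' → e.inf ≤ e'.inf := by
  have hle {e e' : Sym2 (Fin n)} (h : finProdFinEquiv (e.inf, e.sup) ≤
      finProdFinEquiv (e'.inf, e'.sup)) : e.inf ≤ e'.inf := by
    have hn : 0 < n := e.inf.pos
    have := Nat.div_le_div_right (c := n) (Fin.le_def.1 h)
    simpa [Nat.add_mul_div_left, hn, Nat.div_eq_of_lt] using this
  refine ⟨fun e => finProdFinEquiv (e.inf, e.sup), fun e e' h => ?_, fun e e' h => hle h⟩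
  exact Sym2.inf_eq_inf_and_sup_eq_sup.1
    (Prod.mk.injEq .. ▸ finProdFinEquiv.injective (Fin.ext h))

theorem exists_injective_pairwise_lt {X : Type*} [Countable X] {l : List X} (hl : l.Nodup) :
    ∃ L : X → ℕ, Function.Injective L ∧ l.Pairwise fun a b => L a < L b := by
  classical
  obtain ⟨code⟩ := nonempty_embedding_nat X
  let L (a : X) : ℕ := if a ∈ l then l.idxOf a else l.length + code a
  refine ⟨L, fun a b hab => ?_, List.pairwise_iff_getElem.2 fun i j hi hj hij => ?_⟩
  · by_cases ha : a ∈ l <;> by_cases hb : b ∈ l <;> simp only [L, ha, hb, if_true, if_false] at hab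
    · exact (List.idxOf_inj ha).1 hab
    · have := List.idxOf_lt_length_iff.2 ha
      lia
    · have := List.idxOf_lt_length_iff.2 hb
      lia
    · exact code.injective (Nat.add_left_cancel hab)
  · simpa [L, hl.idxOf_getElem] using hij

theorem orderChrom_eq_top {n : ℕ} {G : SimpleGraph (Fin n)} {L : Sym2 (Fin n) → ℕ}
    (h : ∀ (m : ℕ) (f : Fin n ↪ Fin m), ¬ ∀ e ∈ G.edgeSet, ∀ e' ∈ G.edgeSet, L e < L e' →
      (e.map f).inf ≤ (e'.map f).inf) : orderChrom {EOGraph.mk n G L} = ⊤ := by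
  refine iInf_eq_top.2 fun m => iInf₂_eq_top.2 fun H hH => absurd ?_ hH
  obtain ⟨K, hK, hinf⟩ := exists_injective_label_inf_le m
  refine ⟨K, EOGraph.valid_iff_injOn.2 hK.injOn, ?_⟩
  rintro _ rfl ⟨f, -, hf⟩
  refine h m f fun e he e' he' hlt => hinf _ _ ?_
  induction e with | _ a b
  induction e' with | _ c d
  exact ((hf a b c d he he').1 hlt).le

theorem mem_of_inf_map_le {V α : Type*} [LinearOrder α] {f : V → α} (hf : Function.Injective f)
    {x u v y : V} {e : Sym2 V} (huv : u ≠ v) (huy : u ≠ y)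
    (h₁ : (s(u, v).map f).inf ≤ (e.map f).inf) (h₂ : (e.map f).inf ≤ (s(v, y).map f).inf)
    (h₃ : (s(v, y).map f).inf ≤ (s(x, u).map f).inf) : v ∈ e := by
  induction e with | _ a b
  simp only [Sym2.map_mk, Sym2.inf_mk] at h₁ h₂ h₃
  have huv' := hf.ne huv
  have huy' := hf.ne huy
  -- Otherwise `f u` would be the least element of `{f v, f y}`.
  have hvu : f v ≤ f u := by grind
  have hmin : min (f a) (f b) = f v := by grind
  exact Sym2.mem_iff.2 ((min_choice (f a) (f b)).imp
    (fun h => hf (hmin.symm.trans h)) fun h => hf (hmin.symm.trans h))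

theorem IsThreeTrail.chiPlus_eq_top {n : ℕ} {G : SimpleGraph (Fin n)} {x u v y : Fin n}
    (h : IsThreeTrail G x u v y) {e : Sym2 (Fin n)} (he : e ∈ G.edgeSet)
    (hnot : e ∉ [s(x, u), s(u, v), s(v, y)]) : chiPlus G = ⊤ := by
  wlog hve : v ∉ e generalizing x u v y
  · refine this h.symm (fun hmem => hnot ?_) fun hue => hnot ?_
    · grind [Sym2.eq_swap]
    · simp [(Sym2.mem_and_mem_iff h.adj_mid.ne).1 ⟨hue, not_not.1 hve⟩]
  obtain ⟨hxu, huv, hvy, hxv, huy⟩ := h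
  have hnodup : [s(u, v), e, s(v, y), s(x, u)].Nodup := by
    have edges_ne : s(u, v) ≠ s(v, y) ∧ s(u, v) ≠ s(x, u) ∧ s(v, y) ≠ s(x, u) := by
      simp only [ne_eq, Sym2.eq_iff]
      grind [huv.ne]
    grind
  obtain ⟨L, hL, hpairwise⟩ := exists_injective_pairwise_lt hnodup
  simp only [List.pairwise_cons, List.mem_cons] at hpairwise
  refine top_le_iff.1 ((orderChrom_eq_top fun m f hf => hve ?_).ge.trans
    (orderChrom_le_chiPlus hL.injOn))
  exact mem_of_inf_map_le f.injective huv.ne huy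
    (hf _ huv _ he (hpairwise.1 _ (by simp))) (hf _ he _ hvy (hpairwise.2.1 _ (by simp)))
    (hf _ hvy _ hxu (hpairwise.2.2.1 _ (by simp)))

end InfiniteOrderChromaticNumber

theorem chiPlus_eq_top {N : ℕ} {G : SimpleGraph (Fin N)} (hne : G.edgeSet.Nonempty)
    (hiso : ∀ v, ∃ w, G.Adj v w) (hstar : ¬ IsStarForest G)
    (hpath : ¬ Nonempty (G ≃g SimpleGraph.pathGraph 4))
    (htriangle : ¬ Nonempty (G ≃g (⊤ : SimpleGraph (Fin 3)))) : chiPlus G = ⊤ := by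
  obtain ⟨x, u, v, y, h⟩ : ∃ x u v y, IsThreeTrail G x u v y := by
    by_contra! hno
    exact hstar (isStarForest_of_forall_not_isThreeTrail hne hno)
  by_cases hG : ∀ e ∈ G.edgeSet, e ∈ [s(x, u), s(u, v), s(v, y)]
  · exact absurd (h.nonempty_iso hiso hG) (by tauto)
  · push Not at hG
    obtain ⟨e, he, hnot⟩ := hG
    exact h.chiPlus_eq_top he hnot

/-- For a finite simple graph `G` with at least one edge and no
isolated vertices: `χ⁺(G) = 2` if `G` is a star forest or the path on four vertices;
`χ⁺(K_3) = 3`; and `χ⁺(G) = ∞` for every other such graph. -/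
theorem chiPlus_classification {N : ℕ} (G : SimpleGraph (Fin N))
    (hne : G.edgeSet.Nonempty) (hiso : ∀ v, ∃ w, G.Adj v w) :
    ((IsStarForest G ∨ Nonempty (G ≃g SimpleGraph.pathGraph 4)) → chiPlus G = 2) ∧
    (Nonempty (G ≃g (⊤ : SimpleGraph (Fin 3))) → chiPlus G = 3) ∧
    ((¬ IsStarForest G ∧ ¬ Nonempty (G ≃g SimpleGraph.pathGraph 4) ∧
        ¬ Nonempty (G ≃g (⊤ : SimpleGraph (Fin 3)))) → chiPlus G = ⊤) := by
  have two_le : 2 ≤ chiPlus G := by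
    refine le_trans ?_ (chromaticNumber_le_chiPlus G)
    exact SimpleGraph.two_le_chromaticNumber_iff_ne_bot.2 (SimpleGraph.edgeSet_nonempty.1 hne)
  refine ⟨?_, ?_, fun ⟨hstar, hpath, htriangle⟩ => chiPlus_eq_top hne hiso hstar hpath htriangle⟩
  · rintro (hstar | ⟨⟨φ⟩⟩)
    · obtain ⟨n, hn⟩ := hstar.exists_completeBipartiteGraph_isOrderContained ℕ ℕ
      exact le_antisymm ((chiPlus_le_chromaticNumber .refl _ hn).trans
        (chromaticNumber_completeBipartiteGraph_le_two _ _)) two_le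
    · exact le_antisymm ((chiPlus_le_chromaticNumber φ _
        fun L _ hK => isOrderContained_pathGraph_four L hK).trans
        (chromaticNumber_completeBipartiteGraph_le_two _ _)) two_le
  · rintro ⟨φ⟩
    have chromaticNumber_top : (⊤ : SimpleGraph (Fin 3)).chromaticNumber = 3 := by simp
    apply le_antisymm
    · exact (chiPlus_le_chromaticNumber φ ⊤ fun L _ hK => isOrderContained_top_three L hK).trans
        chromaticNumber_top.le
    · exact (chromaticNumber_top.symm.trans (SimpleGraph.chromaticNumber_congr φ).symm).le.trans
        (chromaticNumber_le_chiPlus G)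
end

section
/- For every positive integer n, lex(n, P_4^{123}) ≤ 3n/2, with equality if and only if n is divisible by 4; that is, every edge-ordered graph on n vertices avoiding the monotone path P_4^{123} has at most 3n/2 edges, and an edge-ordered graph on n vertices with exactly 3n/2 edges avoiding P_4^{123} exists exactly when 4 divides n. -/
/-- The monotone edge-ordered path `P_4^{123}` on vertices `a,b,c,d`:
edge-order `ab < bc < cd`. -/
def P4_123 : EOGraph := pathEO 4 [1, 2, 3]

/-!
Start a pedestrian at every vertex and let them repeatedly leave along the lowest edge above the one
just traversed. Every dart (oriented edge) is traversed by exactly one pedestrian: the predecessor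
of `(u, v)` is the highest edge at `u` below `uv`. If no pedestrian makes more than `k` steps, then
`2|E| ≤ k|V|`. Four steps `y, x, w, u, v` would force `y = u` and `x = v`, since monotone walks of
three edges are closed; but then the first and the last edge coincide. So `k = 3` works.

If equality holds, then the walk from each `u` is a triangle `u, f u, g u, u`. Here `f` and `g` turn
out to be commuting fixed-point-free involutions, so `V` splits into blocks
`{u, f u, g u, f (g u)}` of size four. Conversely, disjoint copies of `K₄`, each ordered so that its
three perfect matchings come one after the other, attain the bound.
-/

/-- `MonotoneP4Free G L` says that `G`, with edges ordered by the labels `L`, has no monotone path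
on four vertices. The increasing labels already force `a ≠ c` and `b ≠ d`, so `a = d` is the only
way for such a walk not to be a path. -/
def MonotoneP4Free {V α : Type*} [LinearOrder α] (G : SimpleGraph V) (L : Sym2 V → α) : Prop :=
  ∀ ⦃a b c d⦄, G.Adj a b → G.Adj b c → G.Adj c d →
    L s(a, b) < L s(b, c) → L s(b, c) < L s(c, d) → a = d

section Containment

theorem adj_P4_123_iff {i j : Fin 4} :
    P4_123.graph.Adj i j ↔ ∃ k : Fin 3, s(i, j) = s(k.castSucc, k.succ) := by
  change (SimpleGraph.fromRel fun a b : Fin 4 => (a : ℕ) + 1 = b).Adj i j ↔ _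
  simp only [SimpleGraph.fromRel_adj]
  revert i j
  decide

theorem label_P4_123_of_eq {i j : Fin P4_123.nv} {k : Fin 3}
    (h : (s(i, j) : Sym2 (Fin 4)) = s(k.castSucc, k.succ)) : P4_123.label s(i, j) = k + 1 :=
  (congrArg P4_123.label h).trans (by fin_cases k <;> rfl)

theorem adj_P4_123_castSucc_succ (k : Fin 3) : P4_123.graph.Adj k.castSucc k.succ :=
  adj_P4_123_iff.2 ⟨k, rfl⟩

theorem exists_monotone_of_contains_P4_123 {G : EOGraph} (h : G.Contains P4_123) :
    ∃ a b c d, G.graph.Adj a b ∧ G.graph.Adj b c ∧ G.graph.Adj c d ∧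
      G.label s(a, b) < G.label s(b, c) ∧ G.label s(b, c) < G.label s(c, d) ∧ a ≠ d := by
  obtain ⟨f, hadj, hlabel⟩ := h
  have adj (k : Fin 3) : G.graph.Adj (f k.castSucc) (f k.succ) :=
    hadj _ _ (adj_P4_123_castSucc_succ k)
  have lt {k l : Fin 3} (hkl : k < l) :
      G.label s(f k.castSucc, f k.succ) < G.label s(f l.castSucc, f l.succ) := by
    refine (hlabel _ _ _ _ (adj_P4_123_castSucc_succ k) (adj_P4_123_castSucc_succ l)).1 ?_
    rw [label_P4_123_of_eq rfl, label_P4_123_of_eq rfl]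
    omega
  exact ⟨_, _, _, _, adj 0, adj 1, adj 2, lt (k := 0) (l := 1) (by decide),
    lt (k := 1) (l := 2) (by decide), f.injective.ne (show (0 : Fin 4) ≠ 3 by decide)⟩

theorem contains_P4_123_of_monotone {G : EOGraph} {a b c d : Fin G.nv}
    (hab : G.graph.Adj a b) (hbc : G.graph.Adj b c) (hcd : G.graph.Adj c d)
    (hlt₁ : G.label s(a, b) < G.label s(b, c)) (hlt₂ : G.label s(b, c) < G.label s(c, d))
    (had : a ≠ d) : G.Contains P4_123 := by
  have hac : a ≠ c := by rintro rfl; exact hlt₁.ne (congrArg _ Sym2.eq_swap)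
  have hbd : b ≠ d := by rintro rfl; exact hlt₂.ne (congrArg _ Sym2.eq_swap)
  let f : Fin 4 → Fin G.nv := ![a, b, c, d]
  have hf : f.Injective := by
    simp [f, Function.Injective, Fin.forall_fin_succ, hab.ne, hac, had, hbc.ne, hbd, hcd.ne,
      hab.ne', hac.symm, had.symm, hbc.ne', hbd.symm, hcd.ne']
  have adj (k : Fin 3) : G.graph.Adj (f k.castSucc) (f k.succ) := by
    fin_cases k <;> assumption
  have strictMono : StrictMono fun k : Fin 3 ↦ G.label s(f k.castSucc, f k.succ) := by
    refine Fin.strictMono_iff_lt_succ.2 fun k ↦ ?_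
    fin_cases k <;> assumption
  have map_edge {i j : Fin 4} {k : Fin 3} (h : s(i, j) = s(k.castSucc, k.succ)) :
      s(f i, f j) = s(f k.castSucc, f k.succ) :=
    congrArg (Sym2.map f) h
  refine ⟨⟨f, hf⟩, fun i j hij ↦ ?_, fun i j i' j' hij hij' ↦ ?_⟩
  · obtain ⟨k, hk⟩ := adj_P4_123_iff.1 hij
    change s(f i, f j) ∈ G.graph.edgeSet
    rw [map_edge hk]
    exact adj k
  · obtain ⟨k, hk⟩ := adj_P4_123_iff.1 hij
    obtain ⟨l, hl⟩ := adj_P4_123_iff.1 hij'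
    change _ ↔ G.label s(f i, f j) < G.label s(f i', f j')
    rw [label_P4_123_of_eq hk, label_P4_123_of_eq hl, map_edge hk, map_edge hl,
      strictMono.lt_iff_lt]
    omega

theorem avoidsFam_P4_123_iff {G : EOGraph} :
    G.AvoidsFam {P4_123} ↔ MonotoneP4Free G.graph G.label := by
  constructor
  · intro h a b c d hab hbc hcd hlt₁ hlt₂
    by_contra had
    exact h _ rfl (contains_P4_123_of_monotone hab hbc hcd hlt₁ hlt₂ had)
  · rintro h _ rfl hcontains
    obtain ⟨a, b, c, d, hab, hbc, hcd, hlt₁, hlt₂, had⟩ :=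
      exists_monotone_of_contains_P4_123 hcontains
    exact had (h hab hbc hcd hlt₁ hlt₂)

end Containment

section GreedyWalks

variable {V α : Type*} [LinearOrder α] {G : SimpleGraph V} {L : Sym2 V → α}

/-- Among the edges at `u` with label above `t`, the lowest one is `uv`. The threshold `⊥` stands
for no restriction. -/
def IsLowestEdgeAbove (G : SimpleGraph V) (L : Sym2 V → α) (t : WithBot α) (u v : V) : Prop :=
  G.Adj u v ∧ t < L s(u, v) ∧ ∀ w, G.Adj u w → t < L s(u, w) → L s(u, v) ≤ L s(u, w)

/-- The walk that starts at `u` and always leaves along the lowest edge above the one it came by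
goes from `a` to `b` in its step number `i`, counted from zero. -/
inductive IsGreedyStep (G : SimpleGraph V) (L : Sym2 V → α) (u : V) : ℕ → V → V → Prop
  | zero {v : V} : IsLowestEdgeAbove G L ⊥ u v → IsGreedyStep G L u 0 u v
  | succ {i : ℕ} {a b c : V} : IsGreedyStep G L u i a b → IsLowestEdgeAbove G L (L s(a, b)) b c →
      IsGreedyStep G L u (i + 1) b c

theorem IsLowestEdgeAbove.unique (hL : Set.InjOn L G.edgeSet) {t : WithBot α} {u v w : V}
    (hv : IsLowestEdgeAbove G L t u v) (hw : IsLowestEdgeAbove G L t u w) : v = w :=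
  Sym2.congr_right.1 <| hL hv.1 hw.1 <| (hv.2.2 w hw.1 hw.2.1).antisymm (hw.2.2 v hv.1 hv.2.1)

theorem isLowestEdgeAbove_bot_or_exists [Finite V] {u v : V} (h : G.Adj u v) :
    IsLowestEdgeAbove G L ⊥ u v ∨ ∃ w, G.Adj w u ∧ IsLowestEdgeAbove G L (L s(w, u)) u v := by
  obtain hbelow | hbelow := {w | G.Adj w u ∧ L s(w, u) < L s(u, v)}.eq_empty_or_nonempty
  · refine .inl ⟨h, WithBot.bot_lt_coe _, fun w hw _ ↦ ?_⟩
    by_contra! hlt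
    exact hbelow.subset ⟨hw.symm, Sym2.eq_swap (a := u) ▸ hlt⟩
  · obtain ⟨w, ⟨hwu, hlt⟩, hmax⟩ :=
      Set.exists_max_image _ (fun w ↦ L s(w, u)) (Set.toFinite _) hbelow
    refine .inr ⟨w, hwu, h, WithBot.coe_lt_coe.2 hlt, fun x hux hwx ↦ ?_⟩
    by_contra! hxv
    rw [Sym2.eq_swap (a := u)] at hxv hwx
    exact (hmax x ⟨hux.symm, hxv⟩).not_gt (WithBot.coe_lt_coe.1 hwx)

namespace IsGreedyStep

variable {u : V} {i : ℕ} {a b : V}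

theorem adj (h : IsGreedyStep G L u i a b) : G.Adj a b := by
  cases h with
  | zero h => exact h.1
  | succ _ h => exact h.1

theorem unique (hL : Set.InjOn L G.edgeSet) (h : IsGreedyStep G L u i a b) :
    ∀ {a' b' : V}, IsGreedyStep G L u i a' b' → a = a' ∧ b = b' := by
  induction h with
  | zero h =>
    rintro _ _ ⟨h'⟩
    exact ⟨rfl, h.unique hL h'⟩
  | succ _ h ih =>
    rintro _ _ (_ | ⟨hprev, h'⟩)
    obtain ⟨rfl, rfl⟩ := ih hprev
    exact ⟨rfl, h.unique hL h'⟩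

end IsGreedyStep

theorem exists_isGreedyStep [Finite V] {a b : V} (h : G.Adj a b) :
    ∃ u i, IsGreedyStep G L u i a b := by
  obtain ⟨e, he⟩ : ∃ e : Set.range L, e = L s(a, b) := ⟨⟨_, s(a, b), rfl⟩, rfl⟩
  induction e using WellFoundedLT.induction generalizing a b with
  | ind e ih =>
    obtain hfirst | ⟨w, hwa, hnext⟩ := isLowestEdgeAbove_bot_or_exists (L := L) h
    · exact ⟨a, 0, .zero hfirst⟩
    · obtain ⟨u, i, hstep⟩ := ih ⟨L s(w, a), _, rfl⟩
        (show L s(w, a) < e from he ▸ WithBot.coe_lt_coe.1 hnext.2.1) hwa rfl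
      exact ⟨u, i + 1, .succ hstep hnext⟩

theorem exists_injective_greedyStep [Finite V] (hL : Set.InjOn L G.edgeSet) {k : ℕ}
    (hk : ∀ {u i a b}, IsGreedyStep G L u i a b → i < k) :
    ∃ φ : G.Dart → V × Fin k, φ.Injective ∧
      ∀ d, IsGreedyStep G L (φ d).1 (φ d).2 d.fst d.snd := by
  have (d : G.Dart) : ∃ p : V × Fin k, IsGreedyStep G L p.1 p.2 d.fst d.snd := by
    obtain ⟨u, i, h⟩ := exists_isGreedyStep (L := L) d.adj
    exact ⟨(u, ⟨i, hk h⟩), h⟩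
  choose φ hφ using this
  refine ⟨φ, fun d e hde ↦ ?_, hφ⟩
  exact SimpleGraph.Dart.ext _ _ (Prod.ext_iff.2 ((hφ d).unique hL (hde ▸ hφ e)))

theorem natCard_dart [Finite V] : Nat.card G.Dart = 2 * G.edgeSet.ncard := by
  classical
  have := Fintype.ofFinite V
  rw [Nat.card_eq_fintype_card, G.dart_card_eq_twice_card_edges, Set.ncard_eq_toFinset_card']
  rfl

theorem two_mul_ncard_edgeSet_le_of_greedyStep_lt [Finite V] (hL : Set.InjOn L G.edgeSet) {k : ℕ}
    (hk : ∀ {u i a b}, IsGreedyStep G L u i a b → i < k) :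
    2 * G.edgeSet.ncard ≤ k * Nat.card V := by
  obtain ⟨φ, hφ, -⟩ := exists_injective_greedyStep hL hk
  simpa [natCard_dart, mul_comm] using Nat.card_le_card_of_injective φ hφ

theorem exists_greedyStep_of_two_mul_ncard_edgeSet_eq [Finite V] (hL : Set.InjOn L G.edgeSet)
    {k : ℕ} (hk : ∀ {u i a b}, IsGreedyStep G L u i a b → i < k)
    (heq : 2 * G.edgeSet.ncard = k * Nat.card V) (u : V) {i : ℕ} (hi : i < k) :
    ∃ a b, IsGreedyStep G L u i a b := by
  obtain ⟨φ, hφ, hstep⟩ := exists_injective_greedyStep hL hk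
  have hcard : Nat.card (V × Fin k) ≤ Nat.card G.Dart := by
    simp [natCard_dart, heq, mul_comm]
  obtain ⟨d, hd⟩ := (hφ.bijective_of_nat_card_le hcard).surjective (u, ⟨i, hi⟩)
  exact ⟨d.fst, d.snd, by simpa [hd] using hstep d⟩

theorem MonotoneP4Free.greedyStep_lt_three (hfree : MonotoneP4Free G L) {u : V} {i : ℕ} {a b : V}
    (h : IsGreedyStep G L u i a b) : i < 3 := by
  match h with
  | .zero _ | .succ (.zero _) _ | .succ (.succ (.zero _) _) _ => omega
  | .succ (.succ (.succ (a := y) (b := x) hyx hxw) hwu) huv =>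
    have hlt₁ := WithBot.coe_lt_coe.1 hxw.2.1
    have hlt₂ := WithBot.coe_lt_coe.1 hwu.2.1
    have hlt₃ := WithBot.coe_lt_coe.1 huv.2.1
    obtain rfl := hfree hyx.adj hxw.1 hwu.1 hlt₁ hlt₂
    obtain rfl := hfree hxw.1 hwu.1 huv.1 hlt₂ hlt₃
    exact absurd (hlt₁.trans (hlt₂.trans hlt₃)) (lt_irrefl _)

theorem MonotoneP4Free.two_mul_ncard_edgeSet_le [Finite V] (hfree : MonotoneP4Free G L)
    (hL : Set.InjOn L G.edgeSet) : 2 * G.edgeSet.ncard ≤ 3 * Nat.card V :=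
  two_mul_ncard_edgeSet_le_of_greedyStep_lt hL hfree.greedyStep_lt_three

end GreedyWalks

section Equality

variable {V α : Type*} [LinearOrder α] {G : SimpleGraph V} {L : Sym2 V → α} {f g : V → V}

/-- The greedy walk from every vertex `u` is the triangle `u, f u, g u, u`. -/
structure HasGreedyTriangles (G : SimpleGraph V) (L : Sym2 V → α) (f g : V → V) : Prop where
  first (u : V) : IsGreedyStep G L u 0 u (f u)
  second (u : V) : IsGreedyStep G L u 1 (f u) (g u)
  third (u : V) : IsGreedyStep G L u 2 (g u) u

theorem IsGreedyStep.exists_pred {u : V} {i : ℕ} {b c : V} (h : IsGreedyStep G L u (i + 1) b c) :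
    ∃ a, IsGreedyStep G L u i a b ∧ L s(a, b) < L s(b, c) := by
  obtain _ | ⟨hprev, hnext⟩ := h
  exact ⟨_, hprev, WithBot.coe_lt_coe.1 hnext.2.1⟩

theorem IsGreedyStep.eq_start {u a b : V} (h : IsGreedyStep G L u 0 a b) : a = u := by
  cases h
  rfl

theorem MonotoneP4Free.exists_hasGreedyTriangles [Finite V] (hfree : MonotoneP4Free G L)
    (hL : Set.InjOn L G.edgeSet) (heq : 2 * G.edgeSet.ncard = 3 * Nat.card V) :
    ∃ f g, HasGreedyTriangles G L f g := by
  have (u : V) : ∃ v w, IsGreedyStep G L u 0 u v ∧ IsGreedyStep G L u 1 v w ∧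
      IsGreedyStep G L u 2 w u := by
    obtain ⟨w, x, hthird⟩ := exists_greedyStep_of_two_mul_ncard_edgeSet_eq hL
      hfree.greedyStep_lt_three heq u (by decide : 2 < 3)
    obtain ⟨v, hsecond, hlt₂⟩ := hthird.exists_pred
    obtain ⟨y, hfirst, hlt₁⟩ := hsecond.exists_pred
    obtain rfl := hfirst.eq_start
    obtain rfl := hfree hfirst.adj hsecond.adj hthird.adj hlt₁ hlt₂
    exact ⟨v, w, hfirst, hsecond, hthird⟩
  choose f g hfirst hsecond hthird using this
  exact ⟨f, g, hfirst, hsecond, hthird⟩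

namespace HasGreedyTriangles

theorem first_lt_second (T : HasGreedyTriangles G L f g) (u : V) :
    L s(u, f u) < L s(f u, g u) := by
  obtain ⟨a, ha, hlt⟩ := (T.second u).exists_pred
  rwa [ha.eq_start] at hlt

theorem second_lt_third (T : HasGreedyTriangles G L f g) (hL : Set.InjOn L G.edgeSet) (u : V) :
    L s(f u, g u) < L s(g u, u) := by
  obtain ⟨a, ha, hlt⟩ := (T.third u).exists_pred
  rwa [(ha.unique hL (T.second u)).1] at hlt

theorem eq_or_exists_or_eq_of_adj [Finite V] (T : HasGreedyTriangles G L f g)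
    (hL : Set.InjOn L G.edgeSet) (hfree : MonotoneP4Free G L) {a b : V} (h : G.Adj a b) :
    b = f a ∨ (∃ x, a = f x ∧ b = g x) ∨ a = g b := by
  obtain ⟨u, i, hstep⟩ := exists_isGreedyStep (L := L) h
  obtain rfl | rfl | rfl : i = 0 ∨ i = 1 ∨ i = 2 := by
    have := hfree.greedyStep_lt_three hstep
    omega
  · obtain ⟨rfl, rfl⟩ := hstep.unique hL (T.first u)
    exact .inl rfl
  · exact .inr (.inl ⟨u, hstep.unique hL (T.second u)⟩)
  · obtain ⟨rfl, rfl⟩ := hstep.unique hL (T.third u)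
    exact .inr (.inr rfl)

theorem fst_ne_snd (T : HasGreedyTriangles G L f g) (u : V) : f u ≠ g u :=
  (T.second u).adj.ne

theorem involutive_fst [Finite V] (T : HasGreedyTriangles G L f g)
    (hL : Set.InjOn L G.edgeSet) (hfree : MonotoneP4Free G L) : f.Involutive := by
  intro u
  obtain h | ⟨x, hfx, hgx⟩ | h := T.eq_or_exists_or_eq_of_adj hL hfree (T.first u).adj.symm
  · exact h.symm
  · have hlt₁ : L s(x, f u) < L s(f u, u) := by
      simpa only [← hfx, ← hgx] using T.first_lt_second x
    have hlt₂ : L s(f u, u) < L s(u, g u) := by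
      simpa only [Sym2.eq_swap] using (T.first_lt_second u).trans (T.second_lt_third hL u)
    obtain rfl : x = g u :=
      hfree (hfx ▸ (T.first x).adj) (T.first u).adj.symm (T.third u).adj.symm hlt₁ hlt₂
    rw [Sym2.eq_swap, Sym2.eq_swap (b := u)] at hlt₁
    exact absurd hlt₁ (T.first_lt_second u).not_gt
  · exact absurd h (T.fst_ne_snd u)

theorem involutive_snd [Finite V] (T : HasGreedyTriangles G L f g)
    (hL : Set.InjOn L G.edgeSet) (hfree : MonotoneP4Free G L) : g.Involutive := by
  intro u
  obtain h | ⟨x, hfx, hgx⟩ | h := T.eq_or_exists_or_eq_of_adj hL hfree (T.third u).adj.symm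
  · exact absurd h.symm (T.fst_ne_snd u)
  · obtain rfl : x = f u := by rw [hfx, T.involutive_fst hL hfree]
    have hlt : L s(u, g u) < L s(g u, f u) := by
      simpa only [← hfx, ← hgx] using T.second_lt_third hL (f u)
    rw [Sym2.eq_swap, Sym2.eq_swap (b := f u)] at hlt
    exact absurd hlt (T.second_lt_third hL u).not_gt
  · exact h.symm

theorem commute [Finite V] (T : HasGreedyTriangles G L f g) (hL : Set.InjOn L G.edgeSet)
    (hfree : MonotoneP4Free G L) : Function.Commute f g := by
  have hf := T.involutive_fst hL hfree
  have hg := T.involutive_snd hL hfree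
  intro u
  obtain h | ⟨x, hfx, hgx⟩ | h := T.eq_or_exists_or_eq_of_adj hL hfree (T.second u).adj.symm
  · exact absurd (hf.injective h).symm (T.third u).adj.ne
  · rw [hfx, hgx, hf, hg]
  · exact absurd (hg.injective h) (T.first u).adj.ne

end HasGreedyTriangles

theorem dvd_card_of_forall_card_block_eq {V : Type*} [Fintype V] {d : ℕ}
    (block : V → Finset V) (hblock : ∀ u v, block v = block u ↔ v ∈ block u)
    (hcard : ∀ u, (block u).card = d) : d ∣ Fintype.card V := by
  classical
  rw [← Finset.card_univ, Finset.card_eq_sum_card_image block]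
  refine Finset.dvd_sum fun s hs ↦ ?_
  obtain ⟨u, -, rfl⟩ := Finset.mem_image.1 hs
  simp [hblock, hcard]

theorem four_dvd_card_of_commute_of_involutive {V : Type*} [Fintype V] {f g : V → V}
    (hf : f.Involutive) (hg : g.Involutive) (hfg : Function.Commute f g) (hf_ne : ∀ u, f u ≠ u)
    (hg_ne : ∀ u, g u ≠ u) (hfg_ne : ∀ u, f u ≠ g u) : 4 ∣ Fintype.card V := by
  classical
  refine dvd_card_of_forall_card_block_eq (fun u ↦ {u, f u, g u, f (g u)}) (fun u v ↦ ?_)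
    fun u ↦ ?_
  · have hfg' (w : V) : f (g w) = g (f w) := hfg w
    refine ⟨fun h ↦ h ▸ Finset.mem_insert_self _ _, fun h ↦ ?_⟩
    simp only [Finset.mem_insert, Finset.mem_singleton] at h
    ext w
    simp only [Finset.mem_insert, Finset.mem_singleton]
    obtain rfl | rfl | rfl | rfl := h
    · rfl
    all_goals
      simp only [hfg', hf _, hg _]
      tauto
  · have h₁ : u ≠ f (g u) := fun h ↦ hfg_ne u (by rw [h, hf, ← h])
    have h₂ : f u ≠ f (g u) := hf.injective.ne (hg_ne u).symm
    simp [h₁, h₂, hfg_ne, (hf_ne _).symm, (hg_ne u).symm]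

theorem MonotoneP4Free.four_dvd_natCard [Finite V] (hfree : MonotoneP4Free G L)
    (hL : Set.InjOn L G.edgeSet) (heq : 2 * G.edgeSet.ncard = 3 * Nat.card V) : 4 ∣ Nat.card V := by
  have := Fintype.ofFinite V
  obtain ⟨f, g, T⟩ := hfree.exists_hasGreedyTriangles hL heq
  rw [Nat.card_eq_fintype_card]
  exact four_dvd_card_of_commute_of_involutive (T.involutive_fst hL hfree)
    (T.involutive_snd hL hfree) (T.commute hL hfree) (fun u ↦ (T.first u).adj.ne')
    (fun u ↦ (T.third u).adj.ne) T.fst_ne_snd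

end Equality

section Construction

theorem exists_injective_lt_imp_le {ι α : Type*} [Finite ι] [LinearOrder α] (c : ι → α) :
    ∃ L : ι → ℕ, L.Injective ∧ ∀ {i j}, L i < L j → c i ≤ c j := by
  let e := Finite.equivFin ι
  let σ := Tuple.sort (c ∘ e.symm)
  refine ⟨fun i ↦ σ.symm (e i), Fin.val_injective.comp (σ.symm.injective.comp e.injective),
    fun {i j} h ↦ ?_⟩
  simpa [σ] using Tuple.monotone_sort (c ∘ e.symm) (Fin.lt_def.2 h).le

/-- The vertex-disjoint union of copies of `K₄` indexed by `ι`. -/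
def disjointK4 (ι : Type*) : SimpleGraph (ι × Fin 4) :=
  SimpleGraph.boxProd ⊥ ⊤

/-- The colour of an edge of `disjointK4 ι`: adding the bit patterns of the end vertices modulo two
colours the three perfect matchings of each `K₄` differently. -/
def matchingColour (ι : Type*) : Sym2 (ι × Fin 4) → Fin 4 :=
  Sym2.lift ⟨fun x y ↦ x.2 ^^^ y.2, fun x y ↦ (by decide : ∀ p q : Fin 4, p ^^^ q = q ^^^ p) _ _⟩

theorem disjointK4_adj {ι : Type*} {x y : ι × Fin 4} :
    (disjointK4 ι).Adj x y ↔ x.2 ≠ y.2 ∧ x.1 = y.1 := by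
  simp [disjointK4, SimpleGraph.boxProd_adj]

theorem xor_eq_xor_and_ne : ∀ {p q r s : Fin 4}, p ≠ q → q ≠ r → r ≠ s → p ≠ r → q ≠ s → p ≠ s →
    p ^^^ q = r ^^^ s ∧ p ^^^ q ≠ q ^^^ r := by
  decide

theorem monotoneP4Free_disjointK4 {ι α : Type*} [LinearOrder α] {L : Sym2 (ι × Fin 4) → α}
    (hL : ∀ {e e'}, L e < L e' → matchingColour ι e ≤ matchingColour ι e') :
    MonotoneP4Free (disjointK4 ι) L := by
  rintro ⟨i, p⟩ ⟨_, q⟩ ⟨_, r⟩ ⟨_, s⟩ hab hbc hcd hlt₁ hlt₂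
  obtain ⟨hpq, rfl⟩ := disjointK4_adj.1 hab
  obtain ⟨hqr, rfl⟩ := disjointK4_adj.1 hbc
  obtain ⟨hrs, rfl⟩ := disjointK4_adj.1 hcd
  have hpr : p ≠ r := by rintro rfl; exact hlt₁.ne (congrArg _ Sym2.eq_swap)
  have hqs : q ≠ s := by rintro rfl; exact hlt₂.ne (congrArg _ Sym2.eq_swap)
  by_contra hne
  have hps : p ≠ s := by rintro rfl; exact hne rfl
  obtain ⟨hmatching, hcolour⟩ := xor_eq_xor_and_ne hpq hqr hrs hpr hqs hps
  have hle₁ : p ^^^ q ≤ q ^^^ r := hL hlt₁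
  have hle₂ : q ^^^ r ≤ r ^^^ s := hL hlt₂
  exact hcolour (hle₁.antisymm (hmatching ▸ hle₂))

theorem two_mul_ncard_edgeSet_disjointK4 (ι : Type*) [Finite ι] :
    2 * (disjointK4 ι).edgeSet.ncard = 3 * Nat.card (ι × Fin 4) := by
  classical
  have := Fintype.ofFinite ι
  have hdegree (x : ι × Fin 4) : (disjointK4 ι).degree x = 3 := by
    rw [disjointK4, SimpleGraph.degree_boxProd]
    simp
  rw [← natCard_dart, Nat.card_eq_fintype_card, SimpleGraph.dart_card_eq_sum_degrees]
  simp [hdegree, mul_comm]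

end Construction

section Extremal

theorem bddAbove_edges (n : ℕ) (F : Set EOGraph) :
    BddAbove {m | ∃ G : EOGraph, G.nv = n ∧ G.Valid ∧ G.AvoidsFam F ∧ G.edges = m} := by
  refine ⟨Nat.card (Sym2 (Fin n)), ?_⟩
  rintro _ ⟨G, rfl, -, -, rfl⟩
  exact Set.ncard_le_card _

theorem MonotoneP4Free.ncard_edgeSet_le_lexFam {V : Type*} [Finite V] {G : SimpleGraph V}
    {L : Sym2 V → ℕ} (hfree : MonotoneP4Free G L) (hL : Set.InjOn L G.edgeSet) :
    G.edgeSet.ncard ≤ lexFam (Nat.card V) {P4_123} := by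
  let e := (Finite.equivFin V).symm
  let iso : G.comap e ≃g G := SimpleGraph.Iso.comap e G
  have hvalid : Set.InjOn (L ∘ Sym2.map e) (G.comap e).edgeSet :=
    hL.comp (Sym2.map.injective e.injective).injOn fun _ ↦ iso.toHom.map_mem_edgeSet
  have hcomap : MonotoneP4Free (G.comap e) (L ∘ Sym2.map e) :=
    fun _ _ _ _ hab hbc hcd hlt₁ hlt₂ ↦ e.injective (hfree hab hbc hcd hlt₁ hlt₂)
  exact le_csSup (bddAbove_edges _ _) ⟨⟨Nat.card V, G.comap e, L ∘ Sym2.map e⟩, rfl,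
    fun _ h _ h' ↦ hvalid h h', avoidsFam_P4_123_iff.2 hcomap, Nat.card_congr iso.mapEdgeSet⟩

theorem exists_edges_eq_lexFam_P4_123 (n : ℕ) : ∃ G : EOGraph, G.nv = n ∧ G.Valid ∧
    G.AvoidsFam {P4_123} ∧ G.edges = lexFam n {P4_123} := by
  have hbot : (EOGraph.mk n ⊥ fun _ ↦ 0).AvoidsFam {P4_123} :=
    avoidsFam_P4_123_iff.2 fun _ _ _ _ h ↦ h.elim
  exact Nat.sSup_mem (s := {m | ∃ G : EOGraph, G.nv = n ∧ G.Valid ∧ G.AvoidsFam {P4_123} ∧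
    G.edges = m}) ⟨_, _, rfl, by simp [EOGraph.Valid], hbot, rfl⟩ (bddAbove_edges n _)

theorem three_mul_le_two_mul_lexFam_P4_123 {n : ℕ} (h : 4 ∣ n) :
    3 * n ≤ 2 * lexFam n {P4_123} := by
  obtain ⟨k, rfl⟩ := h
  obtain ⟨L, hL, hcolour⟩ := exists_injective_lt_imp_le (matchingColour (Fin k))
  have hle := (monotoneP4Free_disjointK4 hcolour).ncard_edgeSet_le_lexFam hL.injOn
  have hcard : Nat.card (Fin k × Fin 4) = 4 * k := by simp [mul_comm]
  rw [← hcard, ← two_mul_ncard_edgeSet_disjointK4]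
  exact Nat.mul_le_mul_left 2 hle

end Extremal

/-- For every positive integer `n`, `lex(n, P_4^{123}) ≤ 3n/2`, with
equality if and only if `n` is divisible by 4 (stated multiplied by 2 to stay in `ℕ`). -/
theorem lex_P4_123 (n : ℕ) (hn : 1 ≤ n) :
    2 * lexFam n {P4_123} ≤ 3 * n ∧ (2 * lexFam n {P4_123} = 3 * n ↔ 4 ∣ n) := by
  obtain ⟨G, rfl, hvalid, havoids, hedges⟩ := exists_edges_eq_lexFam_P4_123 n
  have hfree : MonotoneP4Free G.graph G.label := avoidsFam_P4_123_iff.1 havoids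
  have hL : Set.InjOn G.label G.graph.edgeSet := fun e he f hf ↦ hvalid e he f hf
  have hle := hfree.two_mul_ncard_edgeSet_le hL
  have hdvd := hfree.four_dvd_natCard hL
  rw [Nat.card_fin, ← EOGraph.edges, hedges] at hle hdvd
  exact ⟨hle, hdvd, fun h ↦ hle.antisymm (three_mul_le_two_mul_lexFam_P4_123 h)⟩
end

section
/- lex(n, P_5^{2143}) = Θ(n log n); that is, there exist constants c, C > 0 such that for all n ≥ 2, c·n·log n ≤ lex(n, P_5^{2143}) ≤ C·n·log n. -/
/-- The edge-ordered path `P_5^{2143}`: edge-order `bc < ab < de < cd`. -/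
def P5_2143 : EOGraph := pathEO 5 [2, 1, 4, 3]

/-!
Upper bound. Split the edges at the median label into a low and a high half. At every vertex remove
the two largest low edges and the three smallest high edges. A vertex `c` meeting surviving edges
`bc` (low) and `cd` (high) would be the middle of a copy `abcde`: `ab` and `de` can be found among
the edges removed at `b` and at `d`. So the two surviving sets have disjoint supports, and one of
them lies on at most `n / 2` vertices while missing only `O(n)` edges of its half. Hence
`f n ≤ 2 * f (n / 2) + 6 * n`.

Lower bound. Label each edge of the hypercube on `2 ^ k` vertices by the number whose `i`-th ternary
digit counts its ends with `i`-th bit `1`, the last coordinate being the most significant. Consider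
a walk `abcde` with labels ordered as `2143`. Its last bit cannot flip twice in a row, since then
either `a = c` or `c = e`. Given this, the order of the leading digits forces the last bit to be
constant, and the walk projects to one of the same kind in a smaller cube.
-/

open Finset

section Rank

variable {α β : Type*} [LinearOrder β] {L : α → β} {E : Finset α} {x y : α}

/-- The rank of `x` in `E` with respect to the labelling `L`, counted from `0`. -/
def labelRank (L : α → β) (E : Finset α) (x : α) : ℕ := #{y ∈ E | L y < L x}

lemma labelRank_lt_labelRank (hx : x ∈ E) (hxy : L x < L y) :
    labelRank L E x < labelRank L E y := by
  refine card_lt_card <| (ssubset_iff_of_subset ?_).2 ⟨x, by simp [hx, hxy], by simp⟩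
  exact monotone_filter_right E fun z _ hz => hz.trans hxy

lemma label_lt_label_of_labelRank_lt (hy : y ∈ E) (hinj : Set.InjOn L E) (hx : x ∈ E)
    (h : labelRank L E x < labelRank L E y) : L x < L y := by
  rcases lt_trichotomy (L x) (L y) with hlt | heq | hgt
  · exact hlt
  · simp only [hinj hx hy heq, lt_irrefl] at h
  · exact absurd (labelRank_lt_labelRank hy hgt) h.asymm

lemma labelRank_lt_card (hx : x ∈ E) : labelRank L E x < #E :=
  card_lt_card <| filter_ssubset.2 ⟨x, hx, lt_irrefl _⟩

lemma injOn_labelRank (hinj : Set.InjOn L E) : Set.InjOn (labelRank L E) E := by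
  intro x hx y hy hxy
  by_contra hne
  rcases (hinj.ne hx hy hne).lt_or_gt with h | h
  · exact (labelRank_lt_labelRank hx h).ne hxy
  · exact (labelRank_lt_labelRank hy h).ne' hxy

lemma image_labelRank (hinj : Set.InjOn L E) : E.image (labelRank L E) = range #E := by
  refine eq_of_subset_of_card_le ?_ ?_
  · exact image_subset_iff.2 fun x hx => mem_range.2 (labelRank_lt_card hx)
  · rw [card_range, card_image_of_injOn (injOn_labelRank hinj)]

lemma card_filter_labelRank_lt (hinj : Set.InjOn L E) (k : ℕ) :
    #{x ∈ E | labelRank L E x < k} = min k #E := by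
  rw [← card_image_of_injOn ((injOn_labelRank hinj).mono (filter_subset _ E)),
    ← filter_image (p := (· < k)), image_labelRank hinj, ← card_range (min k #E)]
  congr 1
  ext i
  simp only [mem_filter, mem_range]
  omega

end Rank

/-- `HasPath2143 L S`: the edge set `S`, ordered by the labelling `L`, contains a copy of
`P_5^{2143}`. -/
def HasPath2143 {V β : Type*} [LT β] (L : Sym2 V → β) (S : Set (Sym2 V)) : Prop :=
  ∃ a b c d e : V, [a, b, c, d, e].Nodup ∧ s(a, b) ∈ S ∧ s(b, c) ∈ S ∧ s(c, d) ∈ S ∧ s(d, e) ∈ S ∧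
    L s(b, c) < L s(a, b) ∧ L s(a, b) < L s(d, e) ∧ L s(d, e) < L s(c, d)

lemma HasPath2143.mono {V β : Type*} [LT β] {L : Sym2 V → β} {S T : Set (Sym2 V)} (hST : S ⊆ T) :
    HasPath2143 L S → HasPath2143 L T := by
  rintro ⟨a, b, c, d, e, hnodup, hab, hbc, hcd, hde, hL⟩
  exact ⟨a, b, c, d, e, hnodup, hST hab, hST hbc, hST hcd, hST hde, hL⟩

section Prune

variable {V β : Type*} [DecidableEq V] [LinearOrder β] {L : Sym2 V → β} {A B E F : Finset (Sym2 V)}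
  {k : ℕ} {u v : V}

/-- The edges of `E` at the vertex `v`. -/
def edgesAt (E : Finset (Sym2 V)) (v : V) : Finset (Sym2 V) := {e ∈ E | v ∈ e}

/-- The vertices incident to an edge of `E`. -/
def edgeSupport (E : Finset (Sym2 V)) : Finset V := E.biUnion Sym2.toFinset

lemma mem_edgeSupport : v ∈ edgeSupport E ↔ ∃ e ∈ E, v ∈ e := by
  simp only [edgeSupport, mem_biUnion, Sym2.mem_toFinset]

lemma edgeSupport_mono (hEF : E ⊆ F) : edgeSupport E ⊆ edgeSupport F :=
  biUnion_subset_biUnion_of_subset_left _ hEF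

lemma one_lt_card_edgeSupport (hloop : ∀ e ∈ E, ¬e.IsDiag) (hE : E.Nonempty) :
    1 < #(edgeSupport E) := by
  obtain ⟨e, he⟩ := hE
  calc 1 < #e.toFinset := by rw [Sym2.card_toFinset_of_not_isDiag e (hloop e he)]; norm_num
    _ ≤ #(edgeSupport E) := card_le_card (subset_biUnion_of_mem Sym2.toFinset he)

/-- The edges of `E` that remain after removing the `k` smallest edges at every vertex. -/
def pruneLowest (L : Sym2 V → β) (k : ℕ) (E : Finset (Sym2 V)) : Finset (Sym2 V) :=
  {e ∈ E | ∀ v ∈ e.toFinset, k ≤ labelRank L (edgesAt E v) e}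

lemma pruneLowest_subset : pruneLowest L k E ⊆ E := filter_subset _ _

lemma card_le_card_pruneLowest_add (hinj : Set.InjOn L E) :
    #E ≤ #(pruneLowest L k E) + k * #(edgeSupport E) := by
  let removed (v : V) := {e ∈ edgesAt E v | labelRank L (edgesAt E v) e < k}
  have hremoved (v : V) : #(removed v) ≤ k :=
    (card_filter_labelRank_lt (hinj.mono (filter_subset _ E)) k).trans_le (min_le_left _ _)
  have hcover : E ⊆ pruneLowest L k E ∪ (edgeSupport E).biUnion removed := by
    intro e he
    by_cases hkeep : e ∈ pruneLowest L k E
    · exact mem_union_left _ hkeep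
    · obtain ⟨v, hv, hlt⟩ : ∃ v ∈ e, labelRank L (edgesAt E v) e < k := by
        simpa [pruneLowest, he] using hkeep
      refine mem_union_right _ (mem_biUnion.2 ⟨v, mem_edgeSupport.2 ⟨e, he, hv⟩, ?_⟩)
      exact mem_filter.2 ⟨mem_filter.2 ⟨he, hv⟩, hlt⟩
  calc #E ≤ #(pruneLowest L k E) + #((edgeSupport E).biUnion removed) :=
        (card_le_card hcover).trans (card_union_le _ _)
    _ ≤ #(pruneLowest L k E) + k * #(edgeSupport E) := by
        rw [mul_comm k]
        exact Nat.add_le_add_left (card_biUnion_le_card_mul _ _ _ fun v _ => hremoved v) _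

lemma exists_label_lt_of_mem_pruneLowest (he : s(u, v) ∈ pruneLowest L k E) {X : Finset V}
    (hX : #X < k) : ∃ w ∉ X, w ≠ u ∧ s(v, w) ∈ E ∧ L s(v, w) < L s(u, v) := by
  have hrank : k ≤ labelRank L (edgesAt E v) s(u, v) :=
    (mem_filter.1 he).2 v (Sym2.mem_toFinset.2 (Sym2.mem_mk_right u v))
  obtain ⟨f, hf, hfX⟩ := exists_mem_notMem_of_card_lt_card
    ((card_image_le (s := X) (f := fun x => s(v, x))).trans_lt (hX.trans_le hrank))
  simp only [edgesAt, mem_filter] at hf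
  obtain ⟨⟨hfE, w, rfl⟩, hlt⟩ := hf
  refine ⟨w, fun hw => hfX (mem_image_of_mem _ hw), ?_, hfE, hlt⟩
  rintro rfl
  exact hlt.ne (congrArg L Sym2.eq_swap)

lemma disjoint_edgeSupport_pruneLowest (hlt : ∀ f ∈ A, ∀ g ∈ B, L f < L g)
    (hloopA : ∀ f ∈ A, ¬f.IsDiag) (hloopB : ∀ g ∈ B, ¬g.IsDiag) (hpath : ¬HasPath2143 L (A ∪ B)) :
    Disjoint (edgeSupport (pruneLowest (OrderDual.toDual ∘ L) 2 A))
      (edgeSupport (pruneLowest L 3 B)) := by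
  rw [disjoint_left]
  intro c hcA hcB
  obtain ⟨_, hcbA, b, rfl⟩ := mem_edgeSupport.1 hcA
  obtain ⟨_, hcdB, d, rfl⟩ := mem_edgeSupport.1 hcB
  obtain ⟨a, had, hac, hba, hcb_ba⟩ :=
    exists_label_lt_of_mem_pruneLowest hcbA (X := {d}) (by simp)
  obtain ⟨e, heab, hec, hde, hde_cd⟩ :=
    exists_label_lt_of_mem_pruneLowest hcdB (X := {a, b}) (card_le_two.trans_lt (by norm_num))
  have hcb := pruneLowest_subset hcbA
  have hcd := pruneLowest_subset hcdB
  have hbd : b ≠ d := by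
    rintro rfl
    exact (hlt _ hcb _ hcd).false
  have hcb_ne : c ≠ b := hloopA _ hcb
  have hba_ne : b ≠ a := hloopA _ hba
  have hcd_ne : c ≠ d := hloopB _ hcd
  have hde_ne : d ≠ e := hloopB _ hde
  simp only [mem_insert, mem_singleton, not_or] at had heab
  refine hpath ⟨a, b, c, d, e, ?_, .inl (Sym2.eq_swap ▸ hba), .inl (Sym2.eq_swap ▸ hcb), .inr hcd,
    .inr hde, ?_, ?_, hde_cd⟩
  · simp only [List.nodup_cons, List.mem_cons, List.not_mem_nil, List.nodup_nil]
    grind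
  · rw [Sym2.eq_swap (a := b), Sym2.eq_swap (a := a)]
    exact hcb_ba
  · rw [Sym2.eq_swap (a := a)]
    exact hlt _ hba _ hde

end Prune

section UpperBound

variable {V β : Type*} [DecidableEq V] [LinearOrder β] {L : Sym2 V → β} {E : Finset (Sym2 V)}

lemma exists_disjoint_edgeSupport_of_not_hasPath2143 (hloop : ∀ e ∈ E, ¬e.IsDiag)
    (hinj : Set.InjOn L E) (hpath : ¬HasPath2143 L (E : Set (Sym2 V))) :
    ∃ A ⊆ E, ∃ B ⊆ E, Disjoint (edgeSupport A) (edgeSupport B) ∧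
      #E ≤ 2 * #A + 6 * #(edgeSupport E) ∧ #E ≤ 2 * #B + 6 * #(edgeSupport E) := by
  let low := {e ∈ E | labelRank L E e < #E / 2}
  let high := {e ∈ E | ¬labelRank L E e < #E / 2}
  have hlowE : low ⊆ E := filter_subset _ _
  have hhighE : high ⊆ E := filter_subset _ _
  have hlow : #low = #E / 2 := by
    rw [card_filter_labelRank_lt hinj, min_eq_left (Nat.div_le_self _ _)]
  have hhigh : #low + #high = #E := card_filter_add_card_filter_not _
  have hlt : ∀ f ∈ low, ∀ g ∈ high, L f < L g := by
    intro f hf g hg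
    simp only [low, high, mem_filter, not_lt] at hf hg
    exact label_lt_label_of_labelRank_lt hg.1 hinj hf.1 (hf.2.trans_le hg.2)
  refine ⟨pruneLowest (OrderDual.toDual ∘ L) 2 low, pruneLowest_subset.trans hlowE,
    pruneLowest L 3 high, pruneLowest_subset.trans hhighE, ?_, ?_, ?_⟩
  · refine disjoint_edgeSupport_pruneLowest hlt (fun f hf => hloop f (hlowE hf))
      (fun g hg => hloop g (hhighE hg)) fun h => hpath (h.mono ?_)
    exact Set.union_subset (coe_subset.2 hlowE) (coe_subset.2 hhighE)
  · have hprune := card_le_card_pruneLowest_add (k := 2)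
      (OrderDual.toDual.injective.comp_injOn (hinj.mono (coe_subset.2 hlowE)))
    have hsupport := card_le_card (edgeSupport_mono hlowE)
    have hpos : 0 < #E → 1 < #(edgeSupport E) :=
      fun h => one_lt_card_edgeSupport hloop (card_pos.1 h)
    omega
  · have hprune := card_le_card_pruneLowest_add (k := 3) (hinj.mono (coe_subset.2 hhighE))
    have hsupport := card_le_card (edgeSupport_mono hhighE)
    omega

lemma two_mul_half_log_add_le {n : ℕ} (hn : 2 ≤ n) (c : ℕ) :
    2 * (c * (n / 2) * Nat.log 2 (n / 2)) + c * n ≤ c * n * Nat.log 2 n := by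
  have hlog : Nat.log 2 n = Nat.log 2 (n / 2) + 1 :=
    Nat.log_of_one_lt_of_le Nat.one_lt_two hn
  calc 2 * (c * (n / 2) * Nat.log 2 (n / 2)) + c * n
      = c * (n / 2 * 2) * Nat.log 2 (n / 2) + c * n := by ring
    _ ≤ c * n * Nat.log 2 (n / 2) + c * n := by gcongr; exact Nat.div_mul_le_self n 2
    _ = c * n * Nat.log 2 n := by rw [hlog]; ring

theorem card_le_of_not_hasPath2143 (hloop : ∀ e ∈ E, ¬e.IsDiag) (hinj : Set.InjOn L E)
    (hpath : ¬HasPath2143 L (E : Set (Sym2 V))) :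
    #E ≤ 6 * #(edgeSupport E) * Nat.log 2 #(edgeSupport E) := by
  induction hn : #(edgeSupport E) using Nat.strong_induction_on generalizing E with
  | _ n ih =>
  obtain rfl | hE := E.eq_empty_or_nonempty
  · simp only [card_empty, zero_le]
  have hn2 : 2 ≤ n := hn ▸ one_lt_card_edgeSupport hloop hE
  have hsmall : ∀ F ⊆ E, #(edgeSupport F) ≤ n / 2 → #F ≤ 6 * (n / 2) * Nat.log 2 (n / 2) := by
    intro F hF hcard
    calc #F ≤ 6 * #(edgeSupport F) * Nat.log 2 #(edgeSupport F) :=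
          ih _ (by omega) (fun e he => hloop e (hF he)) (hinj.mono (coe_subset.2 hF))
            (fun h => hpath (h.mono (coe_subset.2 hF))) rfl
      _ ≤ 6 * (n / 2) * Nat.log 2 (n / 2) := by gcongr
  obtain ⟨A, hA, B, hB, hdisj, hcardA, hcardB⟩ :=
    exists_disjoint_edgeSupport_of_not_hasPath2143 hloop hinj hpath
  have hsum : #(edgeSupport A) + #(edgeSupport B) ≤ n := by
    rw [← card_union_of_disjoint hdisj, ← hn]
    exact card_le_card (union_subset (edgeSupport_mono hA) (edgeSupport_mono hB))
  have hrec := two_mul_half_log_add_le hn2 6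
  obtain h | h : #(edgeSupport A) ≤ n / 2 ∨ #(edgeSupport B) ≤ n / 2 := by omega
  · have := hsmall A hA h
    omega
  · have := hsmall B hB h
    omega

end UpperBound

section PathEO

variable {G : EOGraph} {k : ℕ} {l : List ℕ}

lemma pathEO_adj_iff {x y : Fin (k + 1)} : (pathEO (k + 1) l).graph.Adj x y ↔
    ∃ i : Fin k, s(x, y) = s(i.castSucc, i.succ) := by
  simp only [pathEO, SimpleGraph.fromRel_adj, Sym2.eq_iff, Fin.ext_iff, Fin.val_castSucc,
    Fin.val_succ, ne_eq]
  constructor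
  · rintro ⟨-, h | h⟩
    · exact ⟨⟨x, by omega⟩, .inl ⟨rfl, h.symm⟩⟩
    · exact ⟨⟨y, by omega⟩, .inr ⟨h.symm, rfl⟩⟩
  · rintro ⟨i, h⟩
    omega

lemma pathEO_label_castSucc_succ (i : Fin k) :
    (pathEO (k + 1) l).label s(i.castSucc, i.succ) = l.getD i 0 := by
  have hmin : min i.castSucc i.succ = i.castSucc := min_eq_left i.castSucc_le_succ
  simp only [pathEO, symLabel, Sym2.lift_mk, hmin, Fin.val_castSucc]

lemma contains_pathEO_iff : G.Contains (pathEO (k + 1) l) ↔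
    ∃ f : Fin (k + 1) → Fin G.nv, f.Injective ∧
      (∀ i : Fin k, G.graph.Adj (f i.castSucc) (f i.succ)) ∧
      ∀ i j : Fin k, l.getD i 0 < l.getD j 0 ↔
        G.label s(f i.castSucc, f i.succ) < G.label s(f j.castSucc, f j.succ) := by
  have hadj (i : Fin k) : (pathEO (k + 1) l).graph.Adj i.castSucc i.succ :=
    pathEO_adj_iff.2 ⟨i, rfl⟩
  constructor
  · rintro ⟨f, hf, hlabel⟩
    refine ⟨f, f.injective, fun i => hf _ _ (hadj i), fun i j => ?_⟩
    rw [← hlabel _ _ _ _ (hadj i) (hadj j), pathEO_label_castSucc_succ, pathEO_label_castSucc_succ]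
  · rintro ⟨f, hinj, hf, hlabel⟩
    refine ⟨⟨f, hinj⟩, fun a b hab => ?_, fun a b c d hab hcd => ?_⟩
    · obtain ⟨i, hi⟩ := pathEO_adj_iff.1 hab
      have hmap : s(f a, f b) = s(f i.castSucc, f i.succ) := congrArg (Sym2.map f) hi
      exact G.graph.mem_edgeSet.1 (hmap ▸ G.graph.mem_edgeSet.2 (hf i))
    · obtain ⟨i, hi⟩ := pathEO_adj_iff.1 hab
      obtain ⟨j, hj⟩ := pathEO_adj_iff.1 hcd
      have hmap_i : s(f a, f b) = s(f i.castSucc, f i.succ) := congrArg (Sym2.map f) hi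
      have hmap_j : s(f c, f d) = s(f j.castSucc, f j.succ) := congrArg (Sym2.map f) hj
      have hlabel_i := (congrArg (pathEO (k + 1) l).label hi).trans (pathEO_label_castSucc_succ i)
      have hlabel_j := (congrArg (pathEO (k + 1) l).label hj).trans (pathEO_label_castSucc_succ j)
      have hij := hlabel i j
      rw [← hlabel_i, ← hlabel_j, ← hmap_i, ← hmap_j] at hij
      exact hij

lemma contains_P5_2143_iff :
    G.Contains P5_2143 ↔ HasPath2143 G.label G.graph.edgeSet := by
  rw [P5_2143, contains_pathEO_iff]
  constructor
  · rintro ⟨f, hinj, hadj, hlabel⟩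
    refine ⟨f 0, f 1, f 2, f 3, f 4, ?_, hadj 0, hadj 1, hadj 2, hadj 3, ?_, ?_, ?_⟩
    · simpa using List.nodup_ofFn.2 hinj
    · exact (hlabel 1 0).1 (by decide)
    · exact (hlabel 0 3).1 (by decide)
    · exact (hlabel 3 2).1 (by decide)
  · rintro ⟨a, b, c, d, e, hnodup, hab, hbc, hcd, hde, hbc_ab, hab_de, hde_cd⟩
    refine ⟨![a, b, c, d, e], List.nodup_ofFn.1 (by simpa using hnodup), ?_, ?_⟩
    · simpa [Fin.forall_fin_succ] using And.intro hab ⟨hbc, hcd, hde⟩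
    · have hvals : ∀ i : Fin 4, [2, 1, 4, 3].getD i 0 = (![2, 1, 4, 3] : Fin 4 → ℕ) i := by decide
      intro i j
      rw [hvals, hvals]
      fin_cases i <;> fin_cases j <;> dsimp <;> omega

end PathEO

lemma edgeSet_ncard_le_choose_two {V : Type*} [Fintype V] (H : SimpleGraph V) :
    H.edgeSet.ncard ≤ (Fintype.card V).choose 2 := by
  classical
  rw [← SimpleGraph.coe_edgeFinset, Set.ncard_coe_finset]
  exact H.card_edgeFinset_le_card_choose_two

lemma edges_le_lexFam {G : EOGraph} {F : Set EOGraph} (hvalid : G.Valid) (havoids : G.AvoidsFam F) :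
    G.edges ≤ lexFam G.nv F := by
  refine le_csSup ⟨G.nv.choose 2, ?_⟩ ⟨G, rfl, hvalid, havoids, rfl⟩
  rintro _ ⟨H, hnv, -, -, rfl⟩
  calc H.edges ≤ (Fintype.card (Fin H.nv)).choose 2 := edgeSet_ncard_le_choose_two H.graph
    _ = G.nv.choose 2 := by rw [Fintype.card_fin, hnv]

lemma edges_le_of_avoids_P5_2143 {G : EOGraph} (hvalid : G.Valid)
    (havoids : G.Avoids P5_2143) : G.edges ≤ 6 * G.nv * Nat.log 2 G.nv := by
  classical
  rw [EOGraph.Avoids, contains_P5_2143_iff] at havoids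
  have hcard : #(edgeSupport G.graph.edgeFinset) ≤ G.nv := card_finset_fin_le _
  calc G.edges = #G.graph.edgeFinset := by
        rw [EOGraph.edges, ← SimpleGraph.coe_edgeFinset, Set.ncard_coe_finset]
    _ ≤ 6 * #(edgeSupport G.graph.edgeFinset) * Nat.log 2 #(edgeSupport G.graph.edgeFinset) := by
        refine card_le_of_not_hasPath2143 (L := G.label) ?_ ?_ ?_
        · exact fun e he => G.graph.not_isDiag_of_mem_edgeFinset he
        · rw [SimpleGraph.coe_edgeFinset]
          exact fun e he f hf => hvalid e he f hf
        · rwa [SimpleGraph.coe_edgeFinset]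
    _ ≤ 6 * G.nv * Nat.log 2 G.nv := by gcongr

lemma lexFam_P5_2143_le (n : ℕ) : lexFam n {P5_2143} ≤ 6 * n * Nat.log 2 n := by
  refine csSup_le' ?_
  rintro _ ⟨G, rfl, hvalid, havoids, rfl⟩
  exact edges_le_of_avoids_P5_2143 hvalid (havoids _ rfl)

section MapEmbedding

variable {V W : Type*} {H : SimpleGraph V}

lemma HasPath2143.of_map {β : Type*} [LT β] {L : Sym2 W → β} {φ : V ↪ W}
    (h : HasPath2143 L (H.map φ).edgeSet) : HasPath2143 (L ∘ φ.sym2Map) H.edgeSet := by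
  obtain ⟨a, b, c, d, e, hnodup, hab, hbc, hcd, hde, hlt⟩ := h
  obtain ⟨a, b, hab', rfl, rfl⟩ := (SimpleGraph.map_adj φ H _ _).1 hab
  obtain ⟨b', c, hbc', hb, rfl⟩ := (SimpleGraph.map_adj φ H _ _).1 hbc
  obtain ⟨c', d, hcd', hc, rfl⟩ := (SimpleGraph.map_adj φ H _ _).1 hcd
  obtain ⟨d', e, hde', hd, rfl⟩ := (SimpleGraph.map_adj φ H _ _).1 hde
  obtain rfl := φ.injective hb
  obtain rfl := φ.injective hc
  obtain rfl := φ.injective hd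
  exact ⟨_, _, _, _, _, List.Nodup.of_map φ hnodup, hab', hbc', hcd', hde', hlt⟩

lemma ncard_edgeSet_le_lexFam_P5_2143 [Fintype V] {L : Sym2 V → ℕ} {n : ℕ}
    (hcard : Fintype.card V ≤ n) (hinj : Set.InjOn L H.edgeSet) (hpath : ¬HasPath2143 L H.edgeSet) :
    H.edgeSet.ncard ≤ lexFam n {P5_2143} := by
  obtain ⟨φ⟩ : Nonempty (V ↪ Fin n) :=
    Function.Embedding.nonempty_of_card_le (by rwa [Fintype.card_fin])
  let G : EOGraph := ⟨n, H.map φ, Function.extend φ.sym2Map L 0⟩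
  have hlabel : G.label ∘ φ.sym2Map = L := Function.extend_comp φ.sym2Map.injective L 0
  have hedgeSet : G.graph.edgeSet = φ.sym2Map '' H.edgeSet := SimpleGraph.edgeSet_map φ H
  have hvalid : G.Valid := by
    have hinjG : Set.InjOn G.label G.graph.edgeSet := by
      rw [hedgeSet]
      exact Set.InjOn.image_of_comp (by rwa [hlabel])
    exact fun e he f hf => hinjG he hf
  have havoids : G.AvoidsFam {P5_2143} := by
    rintro _ rfl
    rw [EOGraph.Avoids, contains_P5_2143_iff]
    exact fun h => hpath (hlabel ▸ h.of_map)
  calc H.edgeSet.ncard = G.edges := by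
        rw [EOGraph.edges, hedgeSet]
        exact (Set.ncard_image_of_injective _ φ.sym2Map.injective).symm
    _ ≤ lexFam n {P5_2143} := edges_le_lexFam hvalid havoids

end MapEmbedding

section Hypercube

variable {k : ℕ}

/-- The `k`-dimensional hypercube graph. -/
def hypercube (k : ℕ) : SimpleGraph (Fin k → Bool) where
  Adj x y := ∃ i, x i ≠ y i ∧ ∀ j ≠ i, x j = y j
  symm := ⟨fun _ _ ⟨i, hi, h⟩ => ⟨i, hi.symm, fun j hj => (h j hj).symm⟩⟩
  loopless := ⟨fun _ ⟨_, hi, _⟩ => hi rfl⟩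

lemma hypercube_adj_iff_exists_update {x y : Fin k → Bool} :
    (hypercube k).Adj x y ↔ ∃ i, Function.update x i (!x i) = y := by
  refine exists_congr fun i => ?_
  rw [Function.update_eq_iff, Bool.not_eq, ne_comm]

lemma hypercube_adj_succ_iff {x y : Fin (k + 1) → Bool} : (hypercube (k + 1)).Adj x y ↔
    (hypercube k).Adj (Fin.init x) (Fin.init y) ∧ x (Fin.last k) = y (Fin.last k) ∨
      Fin.init x = Fin.init y ∧ x (Fin.last k) ≠ y (Fin.last k) := by
  simp only [hypercube, Fin.exists_fin_succ', Fin.forall_fin_succ', Fin.init, funext_iff]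
  grind

lemma hypercube_degree (x : Fin k → Bool) [Fintype ((hypercube k).neighborSet x)] :
    (hypercube k).degree x = k := by
  have hneighbors : (hypercube k).neighborFinset x =
      univ.image fun i => Function.update x i (!x i) := by
    ext y
    simp only [SimpleGraph.mem_neighborFinset, hypercube_adj_iff_exists_update, mem_image,
      mem_univ, true_and]
  have hinj : Function.Injective fun i => Function.update x i (!x i) := by
    intro i j hij
    by_contra hne
    simpa [Function.update_of_ne hne] using congrFun hij i
  rw [← SimpleGraph.card_neighborFinset_eq_degree, hneighbors, card_image_of_injective _ hinj,
    card_univ, Fintype.card_fin]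

lemma two_mul_ncard_edgeSet_hypercube (k : ℕ) :
    2 * (hypercube k).edgeSet.ncard = k * 2 ^ k := by
  classical
  rw [← SimpleGraph.coe_edgeFinset, Set.ncard_coe_finset,
    ← SimpleGraph.sum_degrees_eq_twice_card_edges]
  simp [hypercube_degree, mul_comm]

/-- The number of `true` entries of an unordered pair of bits. -/
def bitPairCount : Sym2 Bool → Fin 3 :=
  Sym2.lift ⟨fun p q => if p = q then (if p then 2 else 0) else 1, by decide⟩

lemma bitPairCount_injective : Function.Injective bitPairCount := by decide

/-- The number whose `i`-th ternary digit is the number of ends of the edge `e` with `i`-th bit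
`true`. The direction of `e` is the unique position of the digit `1`. -/
def cubeLabel (e : Sym2 (Fin k → Bool)) : ℕ :=
  finFunctionFinEquiv fun i => bitPairCount (e.map (· i))

lemma cubeLabel_lt (e : Sym2 (Fin k → Bool)) : cubeLabel e < 3 ^ k := Fin.is_lt _

lemma cubeLabel_succ (x y : Fin (k + 1) → Bool) :
    cubeLabel s(x, y) = cubeLabel s(Fin.init x, Fin.init y) +
      bitPairCount s(x (Fin.last k), y (Fin.last k)) * 3 ^ k := by
  simp only [cubeLabel, finFunctionFinEquiv_apply, Fin.sum_univ_castSucc, Sym2.map_mk, Fin.init,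
    Fin.val_castSucc, Fin.val_last]

lemma injOn_cubeLabel (k : ℕ) : Set.InjOn cubeLabel (hypercube k).edgeSet := by
  intro e he f _ h
  induction e with | _ x y
  induction f with | _ z w
  obtain ⟨i, -, hxy⟩ : ∃ i, x i ≠ y i ∧ ∀ j ≠ i, x j = y j := he
  have hbits (j : Fin k) : s(x j, y j) = s(z j, w j) :=
    bitPairCount_injective (congrFun (finFunctionFinEquiv.injective (Fin.ext h)) j)
  have hfixed (j : Fin k) (hj : j ≠ i) : z j = x j ∧ w j = y j := by
    have := hbits j
    rw [hxy j hj] at this ⊢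
    simpa [eq_comm, and_comm] using this
  have ext_of {u v : Fin k → Bool} (huv : u i = v i) (hne : ∀ j ≠ i, u j = v j) : u = v :=
    funext fun j => if hj : j = i then hj ▸ huv else hne j hj
  rcases Sym2.eq_iff.1 (hbits i) with ⟨hxz, hyw⟩ | ⟨hxw, hyz⟩
  · rw [ext_of hxz fun j hj => (hfixed j hj).1.symm, ext_of hyw fun j hj => (hfixed j hj).2.symm]
  · have hxw : x = w := ext_of hxw fun j hj => (hxy j hj).trans (hfixed j hj).2.symm
    have hyz : y = z := ext_of hyz fun j hj => (hxy j hj).symm.trans (hfixed j hj).1.symm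
    rw [hxw, hyz, Sym2.eq_swap]

lemma add_mul_lt_add_mul_iff {m a b p q : ℕ} (ha : a < m) (hb : b < m) :
    a + p * m < b + q * m ↔ p < q ∨ p = q ∧ a < b := by
  rcases lt_trichotomy p q with hpq | rfl | hpq
  · have : (p + 1) * m ≤ q * m := Nat.mul_le_mul_right m hpq
    grind
  · simp only [add_lt_add_iff_right, lt_irrefl, true_and, false_or]
  · have : (q + 1) * m ≤ p * m := Nat.mul_le_mul_right m hpq
    grind

lemma cubeLabel_succ_lt_iff {x y z w : Fin (k + 1) → Bool} :
    cubeLabel s(x, y) < cubeLabel s(z, w) ↔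
      bitPairCount s(x (Fin.last k), y (Fin.last k)) <
          bitPairCount s(z (Fin.last k), w (Fin.last k)) ∨
        bitPairCount s(x (Fin.last k), y (Fin.last k)) =
            bitPairCount s(z (Fin.last k), w (Fin.last k)) ∧
          cubeLabel s(Fin.init x, Fin.init y) < cubeLabel s(Fin.init z, Fin.init w) := by
  rw [cubeLabel_succ, cubeLabel_succ, add_mul_lt_add_mul_iff (cubeLabel_lt _) (cubeLabel_lt _),
    Fin.val_fin_lt, Fin.val_inj]

lemma bits_eq_of_bitPairCount_le {a b c d e : Bool}
    (hbc : bitPairCount s(b, c) ≤ bitPairCount s(a, b))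
    (hab : bitPairCount s(a, b) ≤ bitPairCount s(d, e))
    (hde : bitPairCount s(d, e) ≤ bitPairCount s(c, d))
    (habc : a = b ∨ b = c) (hcde : c = d ∨ d = e) : a = b ∧ b = c ∧ c = d ∧ d = e := by
  decide +revert

lemma adj_init_of_last_eq {x y : Fin (k + 1) → Bool} (hxy : (hypercube (k + 1)).Adj x y)
    (hlast : x (Fin.last k) = y (Fin.last k)) : (hypercube k).Adj (Fin.init x) (Fin.init y) :=
  (hypercube_adj_succ_iff.1 hxy).elim And.left fun h => absurd hlast h.2

lemma init_eq_of_last_ne {x y : Fin (k + 1) → Bool} (hxy : (hypercube (k + 1)).Adj x y)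
    (hlast : x (Fin.last k) ≠ y (Fin.last k)) : Fin.init x = Fin.init y :=
  (hypercube_adj_succ_iff.1 hxy).elim (fun h => absurd h.2 hlast) And.left

lemma last_eq_or_last_eq_of_adj {x y z : Fin (k + 1) → Bool} (hxy : (hypercube (k + 1)).Adj x y)
    (hyz : (hypercube (k + 1)).Adj y z) (hxz : x ≠ z) :
    x (Fin.last k) = y (Fin.last k) ∨ y (Fin.last k) = z (Fin.last k) := by
  by_contra! h
  have hlast : x (Fin.last k) = z (Fin.last k) := by
    rw [Bool.eq_not_of_ne h.1, Bool.eq_not_of_ne h.2, Bool.not_not]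
  have hinit : Fin.init x = Fin.init z :=
    (init_eq_of_last_ne hxy h.1).trans (init_eq_of_last_ne hyz h.2)
  rw [← Fin.snoc_init_self x, ← Fin.snoc_init_self z, hinit, hlast] at hxz
  exact hxz rfl

lemma not_walk2143_cubeLabel {a b c d e : Fin k → Bool} (hab : (hypercube k).Adj a b)
    (hbc : (hypercube k).Adj b c) (hcd : (hypercube k).Adj c d) (hde : (hypercube k).Adj d e)
    (hbc_ab : cubeLabel s(b, c) < cubeLabel s(a, b))
    (hab_de : cubeLabel s(a, b) < cubeLabel s(d, e)) :
    ¬cubeLabel s(d, e) < cubeLabel s(c, d) := by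
  induction k with
  | zero => exact hab.elim fun i _ => i.elim0
  | succ k ih =>
    intro hde_cd
    have hac : a ≠ c := by
      rintro rfl
      exact hbc_ab.ne (congrArg cubeLabel Sym2.eq_swap)
    have hce : c ≠ e := by
      rintro rfl
      exact hde_cd.ne (congrArg cubeLabel Sym2.eq_swap)
    rw [cubeLabel_succ_lt_iff] at hbc_ab hab_de hde_cd
    obtain ⟨hlast_ab, hlast_bc, hlast_cd, hlast_de⟩ := bits_eq_of_bitPairCount_le
      (hbc_ab.elim le_of_lt fun h => h.1.le) (hab_de.elim le_of_lt fun h => h.1.le)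
      (hde_cd.elim le_of_lt fun h => h.1.le) (last_eq_or_last_eq_of_adj hab hbc hac)
      (last_eq_or_last_eq_of_adj hcd hde hce)
    simp only [hlast_ab, hlast_bc, hlast_cd, hlast_de, lt_irrefl, true_and, false_or]
      at hbc_ab hab_de hde_cd
    exact ih (adj_init_of_last_eq hab hlast_ab) (adj_init_of_last_eq hbc hlast_bc)
      (adj_init_of_last_eq hcd hlast_cd) (adj_init_of_last_eq hde hlast_de) hbc_ab hab_de hde_cd

lemma mul_two_pow_le_two_mul_lexFam_P5_2143 {n k : ℕ} (hk : 2 ^ k ≤ n) :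
    k * 2 ^ k ≤ 2 * lexFam n {P5_2143} := by
  have hpath : ¬HasPath2143 cubeLabel (hypercube k).edgeSet := by
    rintro ⟨a, b, c, d, e, -, hab, hbc, hcd, hde, hbc_ab, hab_de, hde_cd⟩
    exact not_walk2143_cubeLabel hab hbc hcd hde hbc_ab hab_de hde_cd
  have hcard : Fintype.card (Fin k → Bool) ≤ n := by simpa using hk
  rw [← two_mul_ncard_edgeSet_hypercube]
  gcongr
  exact ncard_edgeSet_le_lexFam_P5_2143 hcard (injOn_cubeLabel k) hpath

end Hypercube

lemma mul_logb_two_le {n : ℕ} (hn : 2 ≤ n) :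
    n * Real.logb 2 n ≤ 4 * (Nat.log 2 n * 2 ^ Nat.log 2 n) := by
  have hlog_pos : (1 : ℝ) ≤ Nat.log 2 n := by exact_mod_cast Nat.log_pos Nat.one_lt_two hn
  have hn_le : (n : ℝ) ≤ 2 * 2 ^ Nat.log 2 n := by
    exact_mod_cast (Nat.lt_pow_succ_log_self Nat.one_lt_two n).le.trans_eq (pow_succ' 2 _)
  have hlogb_le : Real.logb 2 n ≤ 2 * Nat.log 2 n := by
    have hfloor := Nat.lt_floor_add_one (Real.logb 2 n)
    rw [show (2 : ℝ) = (2 : ℕ) by norm_num, Real.natFloor_logb_natCast] at hfloor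
    push_cast at hfloor
    linarith
  calc n * Real.logb 2 n ≤ (2 * 2 ^ Nat.log 2 n) * (2 * Nat.log 2 n) := by
        gcongr
        exact Real.logb_nonneg one_lt_two (by exact_mod_cast (by omega : 1 ≤ n))
    _ = 4 * (Nat.log 2 n * 2 ^ Nat.log 2 n) := by ring

/-- `lex(n, P_5^{2143}) = Θ(n log n)`. -/
theorem lex_P5_2143 :
    ∃ c C : ℝ, 0 < c ∧ 0 < C ∧ ∀ n : ℕ, 2 ≤ n →
      c * (n : ℝ) * Real.logb 2 (n : ℝ) ≤ (lexFam n {P5_2143} : ℝ) ∧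
      (lexFam n {P5_2143} : ℝ) ≤ C * (n : ℝ) * Real.logb 2 (n : ℝ) := by
  refine ⟨1 / 8, 6, by norm_num, by norm_num, fun n hn => ⟨?_, ?_⟩⟩
  · have hcube : (Nat.log 2 n * 2 ^ Nat.log 2 n : ℝ) ≤ 2 * lexFam n {P5_2143} := by
      exact_mod_cast mul_two_pow_le_two_mul_lexFam_P5_2143 (Nat.pow_log_le_self 2 (by omega))
    linarith [mul_logb_two_le hn]
  · calc (lexFam n {P5_2143} : ℝ) ≤ 6 * n * Nat.log 2 n := by exact_mod_cast lexFam_P5_2143_le n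
      _ ≤ 6 * n * Real.logb 2 n := by
        gcongr
        exact_mod_cast Real.natLog_le_logb n 2
end

section
/- There exists a constant C > 0 such that for all n ≥ 2, lex(n, C_4^{1243}) ≤ C·n^{3/2}·log n; that is, every edge-ordered graph on n vertices avoiding the edge-ordered four-cycle C_4^{1243} has at most C·n^{3/2}·log n edges. -/
/-- The edge-ordered four-cycle `C_4^{1243}` on vertices `a, b, c, d = 0, 1, 2, 3`
with edges `ab, bc, cd, da` labeled `1, 2, 4, 3`, i.e. edge-order `ab < bc < da < cd`. -/
def C4_1243 : EOGraph where
  nv := 4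
  graph := SimpleGraph.fromRel fun a b : Fin 4 => b = a + 1
  label := symLabel fun a b =>
    if (a : ℕ) = 0 ∧ (b : ℕ) = 1 then 1
    else if (a : ℕ) = 1 ∧ (b : ℕ) = 2 then 2
    else if (a : ℕ) = 2 ∧ (b : ℕ) = 3 then 4
    else if (a : ℕ) = 0 ∧ (b : ℕ) = 3 then 3
    else 0

/-!
Let `P(a, c)` count the paths `a b c` whose labels increase. If `a b c` and `a d c` are two of them
with `ab < ad`, then avoiding `C_4^{1243}` forces the nested order `ab < ad < dc < cb`; the four
edges then also form an increasing path `b a d` and an increasing path `d c b`. Double counting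
nested quadruples turns this into `∑ (P(a, c) - P(c, a))² ≤ 2 ∑ P(a, c)`: the matrix `P` is almost
symmetric.

For a threshold `t`, let `X(a, c)` count only the increasing paths whose labels lie on the two sides
of `t`. Then `X` is `P` minus its analogues for the edges below and above `t`, so `X` is almost
symmetric as well. Its symmetric part is controlled because quadruples counted by `X(b, d) X(d, b)`
are never nested, and thus `∑ X² ≤ 6 ∑ P`.

Splitting the labels dyadically, every increasing path crosses the midpoint of exactly one dyadic
interval containing both its labels. Two increasing paths with the same ends cannot lie in different
intervals of one level, so Cauchy–Schwarz bounds the number of paths separated at a given level by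
`n √(6 ∑ P)`. With `O(log n)` levels this gives `∑ P = O(n² log² n)`, whereas Cauchy–Schwarz on the
degrees shows that `m` edges produce at least about `2 m² / n` increasing paths.
-/

namespace EdgeOrdered

open Finset

section Counting

theorem sq_card_le_card_add_two_mul_card {β : Type*} {s : Finset β} {T : Finset (β × β)}
    (hT : ∀ a ∈ s, ∀ b ∈ s, a ≠ b → (a, b) ∈ T ∨ (b, a) ∈ T) : #s ^ 2 ≤ #s + 2 * #T := by
  classical
  have hsub : s.offDiag ⊆ T ∪ T.image Prod.swap := by
    rintro ⟨a, b⟩ hab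
    obtain ⟨ha, hb, hne⟩ := mem_offDiag.mp hab
    simpa using hT a ha b hb hne
  have hcard : #s * #s - #s ≤ #T + #T := calc
    #s * #s - #s = #(s.offDiag) := s.offDiag_card.symm
    _ ≤ #(T ∪ T.image Prod.swap) := card_le_card hsub
    _ ≤ #T + #(T.image Prod.swap) := card_union_le _ _
    _ ≤ #T + #T := Nat.add_le_add_left card_image_le _
  rw [sq]
  lia

theorem sq_sum_of_pairwise_mul_eq_zero {ι R : Type*} [Semiring R] {s : Finset ι} {f : ι → R}
    (hf : (s : Set ι).Pairwise fun i j => f i * f j = 0) :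
    (∑ i ∈ s, f i) ^ 2 = ∑ i ∈ s, f i ^ 2 := by
  rw [sq, sum_mul_sum]
  refine sum_congr rfl fun i hi => ?_
  rw [sq, sum_eq_single_of_mem i hi fun j hj hji => hf hi hj hji.symm]

theorem exists_dyadic_separation {u v K : ℕ} (huv : u < v) (hv : v < 2 ^ K) :
    ∃ i < K, v / 2 ^ (i + 1) = u / 2 ^ (i + 1) ∧
      u < (2 * (u / 2 ^ (i + 1)) + 1) * 2 ^ i ∧ (2 * (u / 2 ^ (i + 1)) + 1) * 2 ^ i ≤ v := by
  have hK : v / 2 ^ K = u / 2 ^ K := by rw [Nat.div_eq_of_lt hv, Nat.div_eq_of_lt (huv.trans hv)]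
  have hex : ∃ k, v / 2 ^ k = u / 2 ^ k := ⟨K, hK⟩
  obtain ⟨i, hi⟩ : ∃ i, Nat.find hex = i + 1 :=
    Nat.exists_eq_succ_of_ne_zero fun h0 => by simp [Nat.find_eq_zero, huv.ne'] at h0
  have heq : v / 2 ^ (i + 1) = u / 2 ^ (i + 1) := hi ▸ Nat.find_spec hex
  have hne : v / 2 ^ i ≠ u / 2 ^ i := Nat.find_min hex (by lia)
  refine ⟨i, by have := Nat.find_min' hex hK; lia, heq, ?_⟩
  have hle : u / 2 ^ i ≤ v / 2 ^ i := Nat.div_le_div_right huv.le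
  rw [pow_succ, ← Nat.div_div_eq_div_mul, ← Nat.div_div_eq_div_mul] at heq
  rw [pow_succ, ← Nat.div_div_eq_div_mul, ← Nat.div_lt_iff_lt_mul (by positivity),
    ← Nat.le_div_iff_mul_le (by positivity)]
  lia

end Counting

section Asymmetry

variable {V : Type*} [Fintype V]

/-- The squared Frobenius distance between the matrix `f`, indexed by `V × V`, and its transpose. -/
def asymmetry (f : V × V → ℕ) : ℤ :=
  ∑ x : V × V, ((f x : ℤ) - f x.swap) ^ 2

theorem asymmetry_eq (f : V × V → ℕ) :
    asymmetry f = 2 * ∑ x, (f x : ℤ) ^ 2 - 2 * ∑ x : V × V, (f x : ℤ) * f x.swap := by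
  have hswap : ∑ x : V × V, (f x.swap : ℤ) ^ 2 = ∑ x, (f x : ℤ) ^ 2 :=
    Equiv.sum_comp (Equiv.prodComm V V) fun x => (f x : ℤ) ^ 2
  have hexpand (x : V × V) :
      ((f x : ℤ) - f x.swap) ^ 2 = f x ^ 2 + f x.swap ^ 2 - 2 * (f x * f x.swap) := by ring
  simp only [asymmetry, hexpand, sum_sub_distrib, sum_add_distrib, ← mul_sum, hswap]
  ring

theorem asymmetry_le_of_add_eq {f g h k : V × V → ℕ} (hf : ∀ x, f x = g x + h x + k x) :
    asymmetry h ≤ 3 * (asymmetry f + asymmetry g + asymmetry k) := by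
  have hsq (u v w : ℤ) : (u - v - w) ^ 2 ≤ 3 * (u ^ 2 + v ^ 2 + w ^ 2) := by
    linarith [sq_nonneg (u + v), sq_nonneg (u + w), sq_nonneg (v - w)]
  simp only [asymmetry]
  rw [← sum_add_distrib, ← sum_add_distrib, mul_sum]
  refine sum_le_sum fun x _ => ?_
  have hdiff : (h x : ℤ) - h x.swap =
      ((f x : ℤ) - f x.swap) - ((g x : ℤ) - g x.swap) - ((k x : ℤ) - k x.swap) := by
    rw [hf, hf]
    push_cast
    ring
  rw [hdiff]
  exact hsq ..

end Asymmetry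

section Definitions

variable {V α : Type*} [LinearOrder α]

/-- `ℓ` is an edge-ordering of `G` avoiding `C_4^{1243}`: it is injective on the edges, and no
closed walk `a b c d` has labels `ab < bc < da < cd`. The vertices of such a walk are automatically
distinct, so they need not be required to be. -/
structure IsC4Avoiding (G : SimpleGraph V) (ℓ : Sym2 V → α) : Prop where
  injOn : Set.InjOn ℓ G.edgeSet
  not_cycle : ∀ ⦃a b c d⦄, G.Adj a b → G.Adj b c → G.Adj c d → G.Adj d a →
    ℓ s(a, b) < ℓ s(b, c) → ℓ s(b, c) < ℓ s(d, a) → ¬ ℓ s(d, a) < ℓ s(c, d)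

/-- The spanning subgraph of `G` formed by the edges with label in `S`. -/
def labelRestrict (G : SimpleGraph V) (ℓ : Sym2 V → α) (S : Set α) : SimpleGraph V where
  Adj a b := G.Adj a b ∧ ℓ s(a, b) ∈ S
  symm := ⟨fun a _ h => ⟨h.1.symm, Sym2.eq_swap (a := a) ▸ h.2⟩⟩
  loopless := ⟨fun _ h => G.irrefl h.1⟩

/-- `a b c` is a path of `G` along which the labels increase. -/
def IsIncPath (G : SimpleGraph V) (ℓ : Sym2 V → α) (a b c : V) : Prop :=
  G.Adj a b ∧ G.Adj b c ∧ ℓ s(a, b) < ℓ s(b, c)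

/-- For `x = (a, c)` and `y = (b, d)`, the increasing path `a d c` is nested inside the increasing
path `a b c`, that is, `ab < ad < dc < cb`. -/
def IsNested (G : SimpleGraph V) (ℓ : Sym2 V → α) (x y : V × V) : Prop :=
  IsIncPath G ℓ y.1 x.1 y.2 ∧ IsIncPath G ℓ x.1 y.2 x.2 ∧ IsIncPath G ℓ y.2 x.2 y.1

variable [Fintype V]

open scoped Classical in
/-- The middle vertices of the increasing paths from `x.1` to `x.2`; their number is the matrix
entry `P(x.1, x.2)` of the proof idea. -/
noncomputable def incMids (G : SimpleGraph V) (ℓ : Sym2 V → α) (x : V × V) : Finset V :=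
  {b | IsIncPath G ℓ x.1 b x.2}

open scoped Classical in
/-- The middle vertices of the increasing paths from `x.1` to `x.2` with first label below `t` and
second label at least `t`; their number is the matrix entry `X(x.1, x.2)` of the proof idea. -/
noncomputable def crossMids (G : SimpleGraph V) (ℓ : Sym2 V → α) (t : α) (x : V × V) : Finset V :=
  {b | G.Adj x.1 b ∧ G.Adj b x.2 ∧ ℓ s(x.1, b) < t ∧ t ≤ ℓ s(b, x.2)}

end Definitions

section IncreasingPaths

variable {V α ι : Type*} {G : SimpleGraph V} {ℓ : Sym2 V → α}

theorem labelRestrict_adj {S : Set α} {a b : V} :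
    (labelRestrict G ℓ S).Adj a b ↔ G.Adj a b ∧ ℓ s(a, b) ∈ S := Iff.rfl

theorem labelRestrict_le (S : Set α) : labelRestrict G ℓ S ≤ G := fun _ _ h => h.1

variable [LinearOrder α]

namespace IsC4Avoiding

theorem mono {H : SimpleGraph V} (hG : IsC4Avoiding G ℓ) (hHG : H ≤ G) : IsC4Avoiding H ℓ where
  injOn := hG.injOn.mono (SimpleGraph.edgeSet_mono hHG)
  not_cycle _ _ _ _ hab hbc hcd hda :=
    hG.not_cycle (hHG hab) (hHG hbc) (hHG hcd) (hHG hda)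

theorem isNested (hG : IsC4Avoiding G ℓ) {a b c d : V} (hb : IsIncPath G ℓ a b c)
    (hd : IsIncPath G ℓ a d c) (hbd : ℓ s(a, b) < ℓ s(a, d)) : IsNested G ℓ (a, c) (b, d) := by
  obtain ⟨hab, hbc, hb⟩ := hb
  obtain ⟨had, hdc, hd⟩ := hd
  have hne : b ≠ d := fun h => hbd.ne (by rw [h])
  have hbc_ne : ℓ s(b, c) ≠ ℓ s(a, d) :=
    hG.injOn.ne hbc had (by grind [hab.ne])
  have hdc_ne : ℓ s(d, c) ≠ ℓ s(b, c) := hG.injOn.ne hdc hbc (by grind [hdc.ne])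
  have hcd_lt : ℓ s(d, c) < ℓ s(b, c) := by
    by_contra hcon
    have hlt := (not_lt.mp hcon).lt_of_ne' hdc_ne
    rcases hbc_ne.lt_or_gt with hcross | hcross
    · exact hG.not_cycle hab hbc hdc.symm had.symm hb (by rwa [Sym2.eq_swap (a := d)])
        (by rwa [Sym2.eq_swap (a := d), Sym2.eq_swap (a := c)])
    · exact hG.not_cycle hab.symm had hdc hbc.symm (by rwa [Sym2.eq_swap (a := b)])
        (by rwa [Sym2.eq_swap (a := c)]) (by rwa [Sym2.eq_swap (a := c)])
  refine ⟨⟨hab.symm, had, ?_⟩, ⟨had, hdc, hd⟩, hdc, hbc.symm, ?_⟩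
  · rwa [Sym2.eq_swap (a := b)]
  · rwa [Sym2.eq_swap (a := c)]

theorem eq_of_isIncPath_fiber [LinearOrder ι] (hG : IsC4Avoiding G ℓ) {f : α → ι}
    (hf : Monotone f) {a b c d : V} {j k : ι}
    (hb : IsIncPath (labelRestrict G ℓ (f ⁻¹' {j})) ℓ a b c)
    (hd : IsIncPath (labelRestrict G ℓ (f ⁻¹' {k})) ℓ a d c) : j = k := by
  by_contra hjk
  wlog hlt : j < k generalizing b d j k
  · exact this hd hb (Ne.symm hjk) ((Ne.lt_or_gt hjk).resolve_left hlt)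
  obtain ⟨⟨hab, -⟩, ⟨hbc, hbc_j⟩, hb⟩ := hb
  obtain ⟨⟨had, had_k⟩, ⟨hdc, -⟩, hd⟩ := hd
  have hcross : ℓ s(b, c) < ℓ s(a, d) := hf.reflect_lt (by rwa [hbc_j, had_k])
  exact hG.not_cycle hab hbc hdc.symm had.symm hb (by rwa [Sym2.eq_swap (a := d)])
    (by rwa [Sym2.eq_swap (a := d), Sym2.eq_swap (a := c)])

end IsC4Avoiding

end IncreasingPaths

section PathCounts

variable {V α : Type*} [LinearOrder α] [Fintype V] {G : SimpleGraph V} {ℓ : Sym2 V → α}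

@[simp]
theorem mem_incMids {x : V × V} {b : V} : b ∈ incMids G ℓ x ↔ IsIncPath G ℓ x.1 b x.2 := by
  simp [incMids]

@[simp]
theorem mem_crossMids {t : α} {x : V × V} {b : V} : b ∈ crossMids G ℓ t x ↔
    G.Adj x.1 b ∧ G.Adj b x.2 ∧ ℓ s(x.1, b) < t ∧ t ≤ ℓ s(b, x.2) := by
  simp [crossMids]

theorem crossMids_subset_incMids (t : α) (x : V × V) : crossMids G ℓ t x ⊆ incMids G ℓ x := by
  intro b hb
  obtain ⟨hab, hbc, hlt, hle⟩ := mem_crossMids.mp hb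
  exact mem_incMids.mpr ⟨hab, hbc, hlt.trans_le hle⟩

theorem card_incMids_eq_below_add_cross_add_above (t : α) (x : V × V) :
    #(incMids G ℓ x) = #(incMids (labelRestrict G ℓ (Set.Iio t)) ℓ x) + #(crossMids G ℓ t x) +
      #(incMids (labelRestrict G ℓ (Set.Ici t)) ℓ x) := by
  classical
  rw [← card_union_of_disjoint, ← card_union_of_disjoint]
  · congr 1
    ext b
    simp only [mem_union, mem_incMids, mem_crossMids, IsIncPath, labelRestrict_adj, Set.mem_Iio,
      Set.mem_Ici]
    grind
  all_goals
    refine disjoint_left.mpr fun b => ?_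
    simp only [mem_union, mem_incMids, mem_crossMids, IsIncPath, labelRestrict_adj, Set.mem_Iio,
      Set.mem_Ici]
    grind

theorem sum_card_incMids_fiber_le {ι : Type*} (s : Finset ι) (f : α → ι) (x : V × V) :
    ∑ j ∈ s, #(incMids (labelRestrict G ℓ (f ⁻¹' {j})) ℓ x) ≤ #(incMids G ℓ x) := by
  classical
  calc ∑ j ∈ s, #(incMids (labelRestrict G ℓ (f ⁻¹' {j})) ℓ x)
      ≤ ∑ j ∈ s, #{b ∈ incMids G ℓ x | f (ℓ s(x.1, b)) = j} := by
        refine sum_le_sum fun j _ => card_le_card fun b hb => ?_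
        obtain ⟨hab, hbc, hlt⟩ := mem_incMids.mp hb
        exact mem_filter.mpr ⟨mem_incMids.mpr ⟨hab.1, hbc.1, hlt⟩, hab.2⟩
    _ = #{b ∈ incMids G ℓ x | f (ℓ s(x.1, b)) ∈ s} := sum_card_fiberwise_eq_card_filter ..
    _ ≤ #(incMids G ℓ x) := card_filter_le ..

open scoped Classical in
theorem IsC4Avoiding.sq_card_incMids_le (hG : IsC4Avoiding G ℓ) (x : V × V) :
    #(incMids G ℓ x) ^ 2 ≤ #(incMids G ℓ x) + 2 * #{y | IsNested G ℓ x y} := by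
  refine sq_card_le_card_add_two_mul_card fun b hb d hd hbd => ?_
  rw [mem_incMids] at hb hd
  have hne : ℓ s(x.1, b) ≠ ℓ s(x.1, d) :=
    hG.injOn.ne hb.1 hd.1 (by simp [hbd, hb.1.ne'])
  simp only [mem_filter_univ]
  exact hne.lt_or_gt.imp (hG.isNested hb hd) (hG.isNested hd hb)

open scoped Classical in
/-- Write `x = (a, c)` and `y = (b, d)`. The first two sets on the left are disjoint because the
largest label is `bc` in the first and `ad` in the second; neither meets the third set, in which
`ab, cd < t ≤ ad, bc`. -/
theorem card_isNested_add_card_isNested_swap_add_cross_le (t : α) (y : V × V) :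
    #{x | IsNested G ℓ x y} + #{x : V × V | IsNested G ℓ x.swap y.swap} +
      #(crossMids G ℓ t y) * #(crossMids G ℓ t y.swap) ≤
        #(incMids G ℓ y) * #(incMids G ℓ y.swap) := by
  rw [← card_product, ← card_product, ← card_union_of_disjoint, ← card_union_of_disjoint]
  · refine card_le_card (union_subset (union_subset ?_ ?_) (product_subset_product
      (crossMids_subset_incMids _ _) (crossMids_subset_incMids _ _)))
    · exact fun x hx => mem_product.mpr ⟨mem_incMids.mpr (mem_filter_univ _ |>.mp hx).1,
        mem_incMids.mpr (mem_filter_univ _ |>.mp hx).2.2⟩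
    · exact fun x hx => mem_product.mpr ⟨mem_incMids.mpr (mem_filter_univ _ |>.mp hx).2.2,
        mem_incMids.mpr (mem_filter_univ _ |>.mp hx).1⟩
  all_goals
    refine disjoint_left.mpr fun x => ?_
    simp only [mem_union, mem_product, mem_crossMids, IsNested, IsIncPath,
      Prod.fst_swap, Prod.snd_swap, Sym2.eq_swap (a := x.2), Sym2.eq_swap (a := x.1)]
    grind

theorem IsC4Avoiding.sum_sq_card_incMids_add_le (hG : IsC4Avoiding G ℓ) (t : α) :
    ∑ x, #(incMids G ℓ x) ^ 2 + ∑ x : V × V, #(crossMids G ℓ t x) * #(crossMids G ℓ t x.swap) ≤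
      ∑ x, #(incMids G ℓ x) + ∑ x : V × V, #(incMids G ℓ x) * #(incMids G ℓ x.swap) := by
  classical
  have hswap : ∑ y : V × V, #{x : V × V | IsNested G ℓ x.swap y.swap} =
      ∑ y, #{x | IsNested G ℓ x y} := by
    refine (Equiv.sum_comp (Equiv.prodComm V V)
      fun y => #{x : V × V | IsNested G ℓ x.swap y}).trans ?_
    refine sum_congr rfl fun y _ => card_equiv (Equiv.prodComm V V) fun x => ?_
    simp only [mem_filter_univ, Equiv.prodComm_apply]
  have hcount : ∑ x, #{y | IsNested G ℓ x y} = ∑ y, #{x | IsNested G ℓ x y} :=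
    sum_card_bipartiteAbove_eq_sum_card_bipartiteBelow _
  have hlower := sum_le_sum fun x (_ : x ∈ univ) => hG.sq_card_incMids_le x
  have hupper := sum_le_sum fun y (_ : y ∈ univ) =>
    card_isNested_add_card_isNested_swap_add_cross_le (G := G) (ℓ := ℓ) t y
  simp only [sum_add_distrib, ← mul_sum] at hlower hupper
  lia

theorem IsC4Avoiding.asymmetry_card_incMids_add_le (hG : IsC4Avoiding G ℓ) (t : α) :
    asymmetry (fun x => #(incMids G ℓ x)) +
      2 * ∑ x : V × V, (#(crossMids G ℓ t x) : ℤ) * #(crossMids G ℓ t x.swap) ≤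
        2 * ∑ x, (#(incMids G ℓ x) : ℤ) := by
  have hcount := hG.sum_sq_card_incMids_add_le t
  zify at hcount
  rw [asymmetry_eq]
  linarith

theorem IsC4Avoiding.sum_sq_card_crossMids_le (hG : IsC4Avoiding G ℓ) (t : α) :
    ∑ x, #(crossMids G ℓ t x) ^ 2 ≤ 6 * ∑ x, #(incMids G ℓ x) := by
  have hnonneg : 0 ≤ ∑ x, (#(crossMids G ℓ t x) : ℤ) := by positivity
  have hnonneg_mul (H : SimpleGraph V) :
      0 ≤ ∑ x : V × V, (#(crossMids H ℓ t x) : ℤ) * #(crossMids H ℓ t x.swap) := by positivity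
  have hasymm {H : SimpleGraph V} (hHG : H ≤ G) :
      asymmetry (fun x => #(incMids H ℓ x)) ≤ 2 * ∑ x, (#(incMids H ℓ x) : ℤ) := by
    linarith [(hG.mono hHG).asymmetry_card_incMids_add_le t, hnonneg_mul H]
  have hbelow := hasymm (labelRestrict_le (ℓ := ℓ) (Set.Iio t))
  have habove := hasymm (labelRestrict_le (ℓ := ℓ) (Set.Ici t))
  have hP := hG.asymmetry_card_incMids_add_le t
  have hsplit := card_incMids_eq_below_add_cross_add_above (G := G) (ℓ := ℓ) t
  have hX := asymmetry_le_of_add_eq hsplit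
  have hsum := Fintype.sum_congr _ _ hsplit
  rw [asymmetry_eq] at hX
  rw [sum_add_distrib, sum_add_distrib] at hsum
  zify at hsum ⊢
  linarith [hnonneg_mul G]

theorem IsC4Avoiding.sq_sum_card_crossMids_fiber_le {ι : Type*} [LinearOrder ι]
    (hG : IsC4Avoiding G ℓ) {f : α → ι} (hf : Monotone f) (t : ι → α) (s : Finset ι) :
    (∑ x, ∑ j ∈ s, #(crossMids (labelRestrict G ℓ (f ⁻¹' {j})) ℓ (t j) x)) ^ 2 ≤
      Fintype.card V ^ 2 * (6 * ∑ x, #(incMids G ℓ x)) := by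
  set H : ι → SimpleGraph V := fun j => labelRestrict G ℓ (f ⁻¹' {j})
  have hdisjoint (x : V × V) : (s : Set ι).Pairwise fun j k =>
      #(crossMids (H j) ℓ (t j) x) * #(crossMids (H k) ℓ (t k) x) = 0 := by
    intro j _ k _ hjk
    by_contra hne
    obtain ⟨b, hb⟩ := card_ne_zero.mp (left_ne_zero_of_mul hne)
    obtain ⟨d, hd⟩ := card_ne_zero.mp (right_ne_zero_of_mul hne)
    exact hjk (hG.eq_of_isIncPath_fiber hf (mem_incMids.mp (crossMids_subset_incMids _ _ hb))
      (mem_incMids.mp (crossMids_subset_incMids _ _ hd)))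
  calc (∑ x, ∑ j ∈ s, #(crossMids (H j) ℓ (t j) x)) ^ 2
      ≤ Fintype.card V ^ 2 * ∑ x, (∑ j ∈ s, #(crossMids (H j) ℓ (t j) x)) ^ 2 := by
        simpa [sq (Fintype.card V)] using sq_sum_le_card_mul_sum_sq (s := univ)
          (f := fun x : V × V => ∑ j ∈ s, #(crossMids (H j) ℓ (t j) x))
    _ = Fintype.card V ^ 2 * ∑ j ∈ s, ∑ x, #(crossMids (H j) ℓ (t j) x) ^ 2 := by
        simp only [sq_sum_of_pairwise_mul_eq_zero (hdisjoint _)]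
        rw [sum_comm]
    _ ≤ Fintype.card V ^ 2 * ∑ j ∈ s, 6 * ∑ x, #(incMids (H j) ℓ x) := by
        gcongr with j
        exact (hG.mono (labelRestrict_le _)).sum_sq_card_crossMids_le _
    _ = Fintype.card V ^ 2 * (6 * ∑ x, ∑ j ∈ s, #(incMids (H j) ℓ x)) := by
        rw [← mul_sum, sum_comm]
    _ ≤ Fintype.card V ^ 2 * (6 * ∑ x, #(incMids G ℓ x)) := by
        gcongr with x
        exact sum_card_incMids_fiber_le s f x

theorem sq_sum_degree_le [DecidableRel G.Adj] (hℓ : Set.InjOn ℓ G.edgeSet) :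
    (∑ v, G.degree v) ^ 2 ≤
      Fintype.card V * (∑ v, G.degree v + 2 * ∑ x, #(incMids G ℓ x)) := by
  classical
  have hdegree (b : V) :
      G.degree b ^ 2 ≤ G.degree b + 2 * #{x : V × V | IsIncPath G ℓ x.1 b x.2} := by
    refine sq_card_le_card_add_two_mul_card fun a ha c hc hac => ?_
    rw [SimpleGraph.mem_neighborFinset] at ha hc
    have hne : ℓ s(a, b) ≠ ℓ s(c, b) := hℓ.ne ha.symm hc.symm (by grind [ha.ne])
    simp only [mem_filter_univ]
    exact hne.lt_or_gt.imp (fun hlt => ⟨ha.symm, hc, by rwa [Sym2.eq_swap (a := b)]⟩)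
      fun hlt => ⟨hc.symm, ha, by rwa [Sym2.eq_swap (a := b)]⟩
  have hcount : ∑ b, #{x : V × V | IsIncPath G ℓ x.1 b x.2} = ∑ x, #(incMids G ℓ x) := by
    simp only [incMids]
    exact sum_card_bipartiteAbove_eq_sum_card_bipartiteBelow _
  calc (∑ v, G.degree v) ^ 2
      ≤ Fintype.card V * ∑ v, G.degree v ^ 2 := sq_sum_le_card_mul_sum_sq
    _ ≤ Fintype.card V *
          ∑ v, (G.degree v + 2 * #{x : V × V | IsIncPath G ℓ x.1 v x.2}) := by
        gcongr with v
        exact hdegree v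
    _ = Fintype.card V * (∑ v, G.degree v + 2 * ∑ x, #(incMids G ℓ x)) := by
        rw [sum_add_distrib, ← mul_sum, hcount]

end PathCounts

section NaturalLabels

variable {V : Type*} [Fintype V] {G : SimpleGraph V} {ℓ : Sym2 V → ℕ} {K : ℕ}

theorem card_incMids_le_sum_dyadic (hK : ∀ e ∈ G.edgeSet, ℓ e < 2 ^ K) (x : V × V) :
    #(incMids G ℓ x) ≤ ∑ i ∈ range K, ∑ j ∈ range (2 ^ K),
      #(crossMids (labelRestrict G ℓ ((· / 2 ^ (i + 1)) ⁻¹' {j})) ℓ ((2 * j + 1) * 2 ^ i) x) := by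
  classical
  calc #(incMids G ℓ x)
      ≤ #((range K).biUnion fun i => (range (2 ^ K)).biUnion fun j =>
          crossMids (labelRestrict G ℓ ((· / 2 ^ (i + 1)) ⁻¹' {j})) ℓ ((2 * j + 1) * 2 ^ i) x) := by
        refine card_le_card fun b hb => ?_
        obtain ⟨hab, hbc, hlt⟩ := mem_incMids.mp hb
        obtain ⟨i, hi, hblock, hbelow, habove⟩ := exists_dyadic_separation hlt (hK _ hbc)
        simp only [mem_biUnion, mem_range, mem_crossMids]
        exact ⟨i, hi, _, (Nat.div_le_self _ _).trans_lt (hK _ hab), ⟨hab, rfl⟩, ⟨hbc, hblock⟩,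
          hbelow, habove⟩
    _ ≤ _ := card_biUnion_le.trans (sum_le_sum fun _ _ => card_biUnion_le)

theorem IsC4Avoiding.sum_card_incMids_le (hG : IsC4Avoiding G ℓ)
    (hK : ∀ e ∈ G.edgeSet, ℓ e < 2 ^ K) :
    ∑ x, #(incMids G ℓ x) ≤ 6 * K ^ 2 * Fintype.card V ^ 2 := by
  set P := ∑ x, #(incMids G ℓ x)
  let C (i : ℕ) : ℕ := ∑ x, ∑ j ∈ range (2 ^ K),
    #(crossMids (labelRestrict G ℓ ((· / 2 ^ (i + 1)) ⁻¹' {j})) ℓ ((2 * j + 1) * 2 ^ i) x)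
  have hPC : P ≤ ∑ i ∈ range K, C i :=
    (sum_le_sum fun x _ => card_incMids_le_sum_dyadic hK x).trans_eq sum_comm
  have hC (i : ℕ) : C i ^ 2 ≤ Fintype.card V ^ 2 * (6 * P) :=
    hG.sq_sum_card_crossMids_fiber_le (fun _ _ h => Nat.div_le_div_right h) _ _
  have hsq : P * P ≤ P * (6 * K ^ 2 * Fintype.card V ^ 2) :=
    calc P * P ≤ (∑ i ∈ range K, C i) ^ 2 := by rw [← sq]; gcongr
      _ ≤ K * ∑ i ∈ range K, C i ^ 2 := by
        have hcauchy := sq_sum_le_card_mul_sum_sq (s := range K) (f := C)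
        rwa [card_range] at hcauchy
      _ ≤ K * ∑ i ∈ range K, Fintype.card V ^ 2 * (6 * P) := by gcongr with i; exact hC i
      _ = P * (6 * K ^ 2 * Fintype.card V ^ 2) := by
        rw [sum_const, card_range, smul_eq_mul]
        ring
  rcases P.eq_zero_or_pos with hP | hP
  · simp [hP]
  · exact Nat.le_of_mul_le_mul_left hsq hP

end NaturalLabels

section LabelRank

variable {V α : Type*} [LinearOrder α]

/-- The number of edges of `G` with label smaller than that of `e`. Replacing the labels by their
ranks keeps the edge-order and makes the labels smaller than the number of edges. -/
noncomputable def labelRank (G : SimpleGraph V) (ℓ : Sym2 V → α) (e : Sym2 V) : ℕ :=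
  {f ∈ G.edgeSet | ℓ f < ℓ e}.ncard

variable [Finite V] {G : SimpleGraph V} {ℓ : Sym2 V → α} {e f : Sym2 V}

theorem labelRank_lt_labelRank (he : e ∈ G.edgeSet) :
    labelRank G ℓ e < labelRank G ℓ f ↔ ℓ e < ℓ f := by
  refine ⟨fun hlt => ?_, fun hlt => Set.ncard_lt_ncard ?_⟩
  · contrapose! hlt
    exact Set.ncard_le_ncard (Set.ofPred_subset_ofPred.mpr fun g hg => ⟨hg.1, hg.2.trans_le hlt⟩)
  · refine (Set.ssubset_iff_of_subset ?_).mpr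
      ⟨e, ⟨he, hlt⟩, fun h => lt_irrefl _ h.2⟩
    exact Set.ofPred_subset_ofPred.mpr fun g hg => ⟨hg.1, hg.2.trans hlt⟩

theorem labelRank_lt_ncard_edgeSet (he : e ∈ G.edgeSet) :
    labelRank G ℓ e < G.edgeSet.ncard :=
  Set.ncard_lt_ncard ((Set.ssubset_iff_of_subset (Set.sep_subset _ _)).mpr
    ⟨e, he, fun h => lt_irrefl _ h.2⟩)

theorem IsC4Avoiding.labelRank (hG : IsC4Avoiding G ℓ) : IsC4Avoiding G (labelRank G ℓ) where
  injOn e he f hf hef := by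
    have hle : ¬ ℓ e < ℓ f := fun h => hef.not_lt ((labelRank_lt_labelRank he).mpr h)
    have hge : ¬ ℓ f < ℓ e := fun h => hef.not_gt ((labelRank_lt_labelRank hf).mpr h)
    exact hG.injOn he hf (le_antisymm (not_lt.mp hge) (not_lt.mp hle))
  not_cycle a b c d hab hbc hcd hda := by
    rw [labelRank_lt_labelRank hab, labelRank_lt_labelRank hbc, labelRank_lt_labelRank hda]
    exact hG.not_cycle hab hbc hcd hda

end LabelRank

section EdgeBound

variable {V α : Type*} [Fintype V] [LinearOrder α] {G : SimpleGraph V} {ℓ : Sym2 V → α}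

theorem IsC4Avoiding.sq_two_mul_ncard_edgeSet_le (hG : IsC4Avoiding G ℓ) {K : ℕ}
    (hK : G.edgeSet.ncard ≤ 2 ^ K) :
    (2 * G.edgeSet.ncard) ^ 2 ≤
      Fintype.card V * (2 * G.edgeSet.ncard + 2 * (6 * K ^ 2 * Fintype.card V ^ 2)) := by
  classical
  have hdegree : ∑ v, G.degree v = 2 * G.edgeSet.ncard := by
    rw [G.sum_degrees_eq_twice_card_edges, ← G.coe_edgeFinset, Set.ncard_coe_finset]
  rw [← hdegree]
  refine (sq_sum_degree_le hG.labelRank.injOn).trans ?_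
  gcongr
  exact hG.labelRank.sum_card_incMids_le fun e he => (labelRank_lt_ncard_edgeSet he).trans_le hK

theorem ncard_edgeSet_le_sq_card (G : SimpleGraph V) : G.edgeSet.ncard ≤ Fintype.card V ^ 2 := by
  classical
  rw [← G.coe_edgeFinset, Set.ncard_coe_finset]
  exact G.card_edgeFinset_le_card_choose_two.trans (Nat.choose_le_pow _ _)

theorem one_le_logb_two {n : ℕ} (hn : 2 ≤ n) : 1 ≤ Real.logb 2 n := by
  rw [Real.le_logb_iff_rpow_le one_lt_two (by positivity), Real.rpow_one]
  exact_mod_cast hn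

theorem clog_sq_le_three_mul_logb {n : ℕ} (hn : 2 ≤ n) :
    (Nat.clog 2 (n ^ 2) : ℝ) ≤ 3 * Real.logb 2 n := by
  have hlog := one_le_logb_two hn
  have hsq : Real.logb 2 ((n ^ 2 : ℕ) : ℝ) = 2 * Real.logb 2 n := by
    push_cast
    exact Real.logb_pow 2 (n : ℝ) 2
  have hceil := Nat.ceil_lt_add_one (a := Real.logb 2 ((n ^ 2 : ℕ) : ℝ)) (by linarith)
  have hclog := Real.natCeil_logb_natCast 2 (n ^ 2)
  rw [Nat.cast_two] at hclog
  rw [hclog] at hceil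
  linarith

theorem IsC4Avoiding.ncard_edgeSet_le (hG : IsC4Avoiding G ℓ) (hV : 2 ≤ Fintype.card V) :
    (G.edgeSet.ncard : ℝ) ≤
      6 * (Fintype.card V : ℝ) ^ ((3 : ℝ) / 2) * Real.logb 2 (Fintype.card V) := by
  have hm := ncard_edgeSet_le_sq_card G
  have hcount := hG.sq_two_mul_ncard_edgeSet_le (hm.trans (Nat.le_pow_clog one_lt_two _))
  have hK := clog_sq_le_three_mul_logb hV
  have hlog := one_le_logb_two hV
  set n := Fintype.card V
  set m := G.edgeSet.ncard
  set l := Real.logb 2 n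
  rify at hcount hm
  have hpow : ((n : ℝ) ^ ((3 : ℝ) / 2)) ^ 2 = (n : ℝ) ^ 3 := by
    rw [← Real.rpow_mul_natCast (by positivity), ← Real.rpow_natCast]
    norm_num
  refine le_of_sq_le_sq ?_ (by positivity)
  have hbound : (2 * m : ℝ) ^ 2 ≤ 144 * (n ^ 3 * l ^ 2) :=
    calc (2 * m : ℝ) ^ 2 ≤ n * (2 * m + 2 * (6 * Nat.clog 2 (n ^ 2) ^ 2 * n ^ 2)) := hcount
      _ ≤ n * (2 * n ^ 2 + 2 * (6 * (3 * l) ^ 2 * n ^ 2)) := by gcongr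
      _ = 2 * (n ^ 3 * 1) + 108 * (n ^ 3 * l ^ 2) := by ring
      _ ≤ 2 * (n ^ 3 * l ^ 2) + 108 * (n ^ 3 * l ^ 2) := by gcongr; exact one_le_pow₀ hlog
      _ ≤ 144 * (n ^ 3 * l ^ 2) := by linarith [show 0 ≤ (n : ℝ) ^ 3 * l ^ 2 by positivity]
  rw [mul_pow, mul_pow, hpow]
  linarith

end EdgeBound

section EdgeOrderedGraphs

theorem contains_of_injective {G H : EOGraph} {f : Fin H.nv → Fin G.nv}
    (hf : Function.Injective f) (hmem : ∀ e ∈ H.graph.edgeSet, e.map f ∈ G.graph.edgeSet)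
    (hlt : ∀ e ∈ H.graph.edgeSet, ∀ e' ∈ H.graph.edgeSet,
      (H.label e < H.label e' ↔ G.label (e.map f) < G.label (e'.map f))) : G.Contains H :=
  ⟨⟨f, hf⟩, fun i j hij => hmem s(i, j) hij, fun i j k l hij hkl => hlt s(i, j) hij s(k, l) hkl⟩

theorem mem_edgeSet_C4_1243 {e : Sym2 (Fin 4)} :
    e ∈ C4_1243.graph.edgeSet ↔ e = s(0, 1) ∨ e = s(1, 2) ∨ e = s(2, 3) ∨ e = s(3, 0) := by
  induction e with | _ i j =>
  change (SimpleGraph.fromRel fun a b : Fin 4 => b = a + 1).Adj i j ↔ _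
  rw [SimpleGraph.fromRel_adj]
  revert i j
  decide

theorem contains_C4_1243 {G : EOGraph} {a b c d : Fin G.nv} (hab : G.graph.Adj a b)
    (hbc : G.graph.Adj b c) (hcd : G.graph.Adj c d) (hda : G.graph.Adj d a)
    (habc : G.label s(a, b) < G.label s(b, c)) (hbcda : G.label s(b, c) < G.label s(d, a))
    (hcda : G.label s(d, a) < G.label s(c, d)) : G.Contains C4_1243 := by
  have hac : a ≠ c := by rintro rfl; exact habc.ne (by rw [Sym2.eq_swap])
  have hbd : b ≠ d := by rintro rfl; exact (habc.trans hbcda).ne (by rw [Sym2.eq_swap])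
  let f : Fin 4 → Fin G.nv := ![a, b, c, d]
  have hf : Function.Injective f := by
    rw [← List.nodup_ofFn]
    simp [f, hab.ne, hac, hda.ne', hbc.ne, hbd, hcd.ne]
  have hmem (e : Sym2 (Fin 4)) (he : e ∈ C4_1243.graph.edgeSet) : e.map f ∈ G.graph.edgeSet := by
    rcases mem_edgeSet_C4_1243.mp he with rfl | rfl | rfl | rfl
    exacts [hab, hbc, hcd, hda]
  have hlabel (e : Sym2 (Fin 4)) (he : e ∈ C4_1243.graph.edgeSet) :
      C4_1243.label e = 1 ∧ e.map f = s(a, b) ∨ C4_1243.label e = 2 ∧ e.map f = s(b, c) ∨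
        C4_1243.label e = 4 ∧ e.map f = s(c, d) ∨ C4_1243.label e = 3 ∧ e.map f = s(d, a) := by
    rcases mem_edgeSet_C4_1243.mp he with rfl | rfl | rfl | rfl <;> simp [C4_1243, symLabel, f]
  have hlt (e : Sym2 (Fin 4)) (he : e ∈ C4_1243.graph.edgeSet) (e' : Sym2 (Fin 4))
      (he' : e' ∈ C4_1243.graph.edgeSet) :
      C4_1243.label e < C4_1243.label e' ↔ G.label (e.map f) < G.label (e'.map f) := by
    rcases hlabel e he with ⟨hl, hm⟩ | ⟨hl, hm⟩ | ⟨hl, hm⟩ | ⟨hl, hm⟩ <;>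
      rcases hlabel e' he' with ⟨hl', hm'⟩ | ⟨hl', hm'⟩ | ⟨hl', hm'⟩ | ⟨hl', hm'⟩ <;>
      rw [hl, hl', hm, hm'] <;> lia
  exact contains_of_injective hf hmem hlt

theorem isC4Avoiding_of_avoids {G : EOGraph} (hG : G.Valid) (hC4 : G.Avoids C4_1243) :
    IsC4Avoiding G.graph G.label where
  injOn e he f hf hef := hG e he f hf hef
  not_cycle _ _ _ _ hab hbc hcd hda habc hbcda hcda :=
    hC4 (contains_C4_1243 hab hbc hcd hda habc hbcda hcda)

theorem lexFam_le {n : ℕ} {F : Set EOGraph} {B : ℝ} (hB : 0 ≤ B)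
    (h : ∀ G : EOGraph, G.nv = n → G.Valid → G.AvoidsFam F → (G.edges : ℝ) ≤ B) :
    (lexFam n F : ℝ) ≤ B := by
  refine (Nat.cast_le.mpr (csSup_le' ?_)).trans (Nat.floor_le hB)
  rintro _ ⟨G, hn, hG, hF, rfl⟩
  exact Nat.le_floor (h G hn hG hF)

end EdgeOrderedGraphs

end EdgeOrdered

/-- There is a constant `C > 0` such that for all `n ≥ 2`,
`lex(n, C_4^{1243}) ≤ C · n^{3/2} · log n`. -/
theorem lex_C4_1243_upper :
    ∃ C : ℝ, 0 < C ∧ ∀ n : ℕ, 2 ≤ n →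
      (lexFam n {C4_1243} : ℝ) ≤ C * (n : ℝ) ^ ((3 : ℝ) / 2) * Real.logb 2 (n : ℝ) := by
  refine ⟨6, by norm_num, fun n hn => EdgeOrdered.lexFam_le ?_ ?_⟩
  · have hlog : 0 ≤ Real.logb 2 n := zero_le_one.trans (EdgeOrdered.one_le_logb_two hn)
    positivity
  · rintro G rfl hvalid havoids
    have hG := EdgeOrdered.isC4Avoiding_of_avoids hvalid (havoids _ rfl)
    simpa only [EOGraph.edges, Fintype.card_fin] using
      hG.ncard_edgeSet_le (by rwa [Fintype.card_fin])
end
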